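/- Let F be a totally real number field, n ≥ 2 an integer, and L a positive definite integral O_F-lattice of rank n+1. Then L is locally n-ADC if and only if L is O_F-maximal. -/

import Mathlib

/-
Quadratic lattices over (local and global) fields, following
"On n-ADC integral quadratic lattices over totally real number fields".

A non-archimedean local field of characteristic ≠ 2 is formalized as a field `K`
together with a valuation subring `O` of `K` which is a complete discrete valuation
ring with finite residue field (completeness is expressed as adic completeness with
respect to the maximal ideal); `K` is automatically the fraction field of `O`.
-/

noncomputable section

namespace QLat

variable {K : Type} [Field K]

/-- The bilinear form associated to a quadratic form `Q`, i.e. `B x y = (Q(x+y)-Q(x)-Q(y))/2`,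
so that `B x x = Q x`. -/
def bil {V : Type} [AddCommGroup V] [Module K V] (Q : QuadraticForm K V) (x y : V) : K :=
  (2 : K)⁻¹ * QuadraticMap.polar (⇑Q) x y

/-- A quadratic form (space) is nondegenerate. -/
def Nondeg {V : Type} [AddCommGroup V] [Module K V] (Q : QuadraticForm K V) : Prop :=
  ∀ x : V, (∀ y : V, QuadraticMap.polar (⇑Q) x y = 0) → x = 0

/-- The `O`-span of a subset `t` of a `K`-vector space: all finite `O`-linear
combinations of elements of `t`. -/
def ospan (O : Subring K) {V : Type} [AddCommGroup V] [Module K V] (t : Set V) : Set V :=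
  {x | ∃ (m : ℕ) (c : Fin m → K) (g : Fin m → V),
    (∀ i, c i ∈ O) ∧ (∀ i, g i ∈ t) ∧ x = ∑ i, c i • g i}

/-- An `O`-lattice in `V`: a finitely generated `O`-submodule of `V`. -/
def IsLattice (O : Subring K) {V : Type} [AddCommGroup V] [Module K V] (L : Set V) : Prop :=
  ∃ t : Finset V, L = ospan O (t : Set V)

/-- An `O`-lattice on `V`: a finitely generated `O`-submodule of `V` spanning `V` over `K`. -/
def IsLatticeOn (O : Subring K) {V : Type} [AddCommGroup V] [Module K V] (L : Set V) : Prop :=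
  IsLattice O L ∧ Submodule.span K L = ⊤

/-- The lattice `L` is integral: `𝔫(L) ⊆ O`, i.e. all values of `Q` on `L` lie in `O`. -/
def IsIntegral (O : Subring K) {V : Type} [AddCommGroup V] [Module K V]
    (Q : QuadraticForm K V) (L : Set V) : Prop :=
  ∀ x ∈ L, Q x ∈ O

/-- The quadratic space `(V,Q)` represents the quadratic space `(W,Q')`. -/
def SpaceRep {W V : Type} [AddCommGroup W] [Module K W] [AddCommGroup V] [Module K V]
    (Q' : QuadraticForm K W) (Q : QuadraticForm K V) : Prop :=
  ∃ σ : W →ₗ[K] V, Function.Injective σ ∧ ∀ x, Q (σ x) = Q' x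

/-- The quadratic spaces `(W,Q')` and `(V,Q)` are isometric. -/
def SpaceIsom {W V : Type} [AddCommGroup W] [Module K W] [AddCommGroup V] [Module K V]
    (Q' : QuadraticForm K W) (Q : QuadraticForm K V) : Prop :=
  ∃ σ : W ≃ₗ[K] V, ∀ x, Q (σ x) = Q' x

/-- The lattice `M` (in `(V,Q)`) represents the lattice `N` (a full lattice in `(W,Q')`):
there is an injective form-preserving `K`-linear map carrying `N` into `M`.  (For a full
lattice `N` this is equivalent to the existence of an injective form-preserving
`O`-linear map `N → M`, since `K` is the fraction field of `O`.) -/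
def LatRep {W V : Type} [AddCommGroup W] [Module K W] [AddCommGroup V] [Module K V]
    (Q' : QuadraticForm K W) (Q : QuadraticForm K V) (N : Set W) (M : Set V) : Prop :=
  ∃ σ : W →ₗ[K] V, Function.Injective σ ∧ (∀ x, Q (σ x) = Q' x) ∧ σ '' N ⊆ M

/-- The lattices `N` (full in `(W,Q')`) and `M` (in `(V,Q)`) are isometric. -/
def LatIsom {W V : Type} [AddCommGroup W] [Module K W] [AddCommGroup V] [Module K V]
    (Q' : QuadraticForm K W) (Q : QuadraticForm K V) (N : Set W) (M : Set V) : Prop :=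
  ∃ σ : W →ₗ[K] V, Function.Injective σ ∧ (∀ x, Q (σ x) = Q' x) ∧ σ '' N = M

/-- The lattice `L` is `O`-maximal: it is integral and is not properly contained in any
(finitely generated) lattice on the same subspace with integral norm. -/
def IsMaximal (O : Subring K) {V : Type} [AddCommGroup V] [Module K V]
    (Q : QuadraticForm K V) (L : Set V) : Prop :=
  IsIntegral O Q L ∧
    ∀ L' : Set V, IsLattice O L' → Submodule.span K L' = Submodule.span K L →
      L ⊆ L' → IsIntegral O Q L' → L' = L

/-- The lattice `L` is `n`-ADC: every integral `O`-lattice `N` of rank `n` (on a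
nondegenerate quadratic space `W` of dimension `n`) whose ambient space is represented by
the space `(V,Q) = K·L` is represented by `L`. -/
def IsADC (O : Subring K) {V : Type} [AddCommGroup V] [Module K V]
    (Q : QuadraticForm K V) (L : Set V) (n : ℕ) : Prop :=
  ∀ (W : Type) [AddCommGroup W] [Module K W] (Q' : QuadraticForm K W),
    Nondeg Q' → Module.finrank K W = n →
    ∀ N : Set W, IsLatticeOn O N → IsIntegral O Q' N →
      SpaceRep Q' Q → LatRep Q' Q N L

/-- The lattice `L` is `n`-universal: it represents every integral `O`-lattice of rank `n`. -/
def IsUniversal (O : Subring K) {V : Type} [AddCommGroup V] [Module K V]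
    (Q : QuadraticForm K V) (L : Set V) (n : ℕ) : Prop :=
  ∀ (W : Type) [AddCommGroup W] [Module K W] (Q' : QuadraticForm K W),
    Nondeg Q' → Module.finrank K W = n →
    ∀ N : Set W, IsLatticeOn O N → IsIntegral O Q' N → LatRep Q' Q N L

end QLat

open scoped TensorProduct
open IsDedekindDomain

namespace QGlob

/-- Scalar-commutation instance for the completed field, registered to help instance
search for modules over `F_v`. -/
noncomputable instance (F : Type) [Field F] [NumberField F]
    (v : HeightOneSpectrum (NumberField.RingOfIntegers F)) :
    SMulCommClass F (v.adicCompletion F) (v.adicCompletion F) :=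
  Algebra.to_smulCommClass


variable (F : Type) [Field F] [NumberField F]

/-- `F` is totally real: every infinite place of `F` is real. -/
def TotallyReal : Prop := ∀ v : NumberField.InfinitePlace F, v.IsReal

/-- The ring of integers `O_F` of `F`, as a subring of `F`. -/
def OF : Subring F := (integralClosure ℤ F).toSubring

/-- A quadratic form over the totally real field `F` is positive definite if its values
at nonzero vectors are positive under every real embedding of `F`. -/
def PosDef {V : Type} [AddCommGroup V] [Module F V] (Q : QuadraticForm F V) : Prop :=
  ∀ (φ : F →+* ℝ) (x : V), x ≠ 0 → 0 < φ (Q x)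

/-- The completion `F_v` of `F` at a finite place `v`. -/
abbrev Fv (v : HeightOneSpectrum (NumberField.RingOfIntegers F)) : Type :=
  v.adicCompletion F

/-- The ring of integers of `F_v`, as a subring of `F_v`. -/
def Ov (v : HeightOneSpectrum (NumberField.RingOfIntegers F)) : Subring (Fv F v) :=
  (v.adicCompletionIntegers F).toSubring

/-- The completion `V_v = F_v ⊗_F V` of a quadratic space `V` over `F` at `v`. -/
abbrev Vv (V : Type) [AddCommGroup V] [Module F V]
    (v : HeightOneSpectrum (NumberField.RingOfIntegers F)) : Type :=
  (Fv F v) ⊗[F] V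

/-- The extension of a quadratic form `Q` on `V` to `V_v`. -/
noncomputable def Qv {V : Type} [AddCommGroup V] [Module F V] (Q : QuadraticForm F V)
    (v : HeightOneSpectrum (NumberField.RingOfIntegers F)) :
    QuadraticForm (Fv F v) (Vv F V v) :=
  letI : Invertible (2 : F) := invertibleOfNonzero two_ne_zero
  Q.baseChange (Fv F v)

/-- The canonical map `V → V_v`. -/
noncomputable def toVv {V : Type} [AddCommGroup V] [Module F V]
    (v : HeightOneSpectrum (NumberField.RingOfIntegers F)) : V → Vv F V v :=
  fun x => (1 : Fv F v) ⊗ₜ[F] x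

/-- The completion `L_v = O_{F_v} ⊗ L` of a lattice `L ⊆ V` at `v`, i.e. the
`O_{F_v}`-span of the image of `L` in `V_v`. -/
noncomputable def Lv {V : Type} [AddCommGroup V] [Module F V] (L : Set V)
    (v : HeightOneSpectrum (NumberField.RingOfIntegers F)) : Set (Vv F V v) :=
  QLat.ospan (Ov F v) (toVv F v '' L)

variable {V : Type} [AddCommGroup V] [Module F V]

/-- `L` is globally `n`-ADC: every positive definite integral `O_F`-lattice `N` of rank
`n` whose ambient space `F·N` is represented by `F·L` is represented by `L`. -/
def IsGlobADC (Q : QuadraticForm F V) (L : Set V) (n : ℕ) : Prop :=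
  ∀ (W : Type) [AddCommGroup W] [Module F W] (Q' : QuadraticForm F W),
    QLat.Nondeg Q' → PosDef F Q' → Module.finrank F W = n →
    ∀ N : Set W, QLat.IsLatticeOn (OF F) N → QLat.IsIntegral (OF F) Q' N →
      QLat.SpaceRep Q' Q → QLat.LatRep Q' Q N L

/-- `L` is globally `n`-universal: it represents every positive definite integral
`O_F`-lattice of rank `n`. -/
def IsGlobUniversal (Q : QuadraticForm F V) (L : Set V) (n : ℕ) : Prop :=
  ∀ (W : Type) [AddCommGroup W] [Module F W] (Q' : QuadraticForm F W),
    QLat.Nondeg Q' → PosDef F Q' → Module.finrank F W = n →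
    ∀ N : Set W, QLat.IsLatticeOn (OF F) N → QLat.IsIntegral (OF F) Q' N →
      QLat.LatRep Q' Q N L

/-- `L` is `n`-regular: it represents every positive definite integral `O_F`-lattice `N`
of rank `n` which is represented by `L` locally at every finite place. -/
def IsNRegular (Q : QuadraticForm F V) (L : Set V) (n : ℕ) : Prop :=
  ∀ (W : Type) [AddCommGroup W] [Module F W] (Q' : QuadraticForm F W),
    QLat.Nondeg Q' → PosDef F Q' → Module.finrank F W = n →
    ∀ N : Set W, QLat.IsLatticeOn (OF F) N → QLat.IsIntegral (OF F) Q' N →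
      (∀ v : HeightOneSpectrum (NumberField.RingOfIntegers F),
        QLat.LatRep (Qv F Q' v) (Qv F Q v) (Lv F N v) (Lv F L v)) →
      QLat.LatRep Q' Q N L

/-- `L` is locally `n`-ADC: `L_v` is `n`-ADC for every finite place `v`. -/
def IsLocADC (Q : QuadraticForm F V) (L : Set V) (n : ℕ) : Prop :=
  ∀ v : HeightOneSpectrum (NumberField.RingOfIntegers F),
    QLat.IsADC (Ov F v) (Qv F Q v) (Lv F L v) n

/-- `L` is locally `n`-universal: `L_v` is `n`-universal for every finite place `v`. -/
def IsLocUniversal (Q : QuadraticForm F V) (L : Set V) (n : ℕ) : Prop :=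
  ∀ v : HeightOneSpectrum (NumberField.RingOfIntegers F),
    QLat.IsUniversal (Ov F v) (Qv F Q v) (Lv F L v) n

/-- `L` has class number one: every `O_F`-lattice in the genus of `L` (i.e. every lattice
on a space isometric to `F·L` which is isometric to `L` at every finite place) is
isometric to `L`. -/
def ClassNumberOne (Q : QuadraticForm F V) (L : Set V) : Prop :=
  ∀ (W : Type) [AddCommGroup W] [Module F W] (Q' : QuadraticForm F W),
    QLat.Nondeg Q' →
    ∀ N : Set W, QLat.IsLatticeOn (OF F) N →
      QLat.SpaceIsom Q' Q →
      (∀ v : HeightOneSpectrum (NumberField.RingOfIntegers F),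
        QLat.LatIsom (Qv F Q' v) (Qv F Q v) (Lv F N v) (Lv F L v)) →
      QLat.LatIsom Q' Q N L

end QGlob

open QLat QGlob

namespace QW
open QuadraticMap

section generic
variable {K : Type} [Field K] {V : Type} [AddCommGroup V] [Module K V]

theorem ospan_eq (O : Subring K) (t : Set V) : ospan O t = (Submodule.span O t : Set V) := by
  ext x
  constructor
  · rintro ⟨m, c, g, hc, hg, rfl⟩
    refine Submodule.sum_mem _ fun i _ => ?_
    exact Submodule.smul_mem _ (⟨c i, hc i⟩ : O) (Submodule.subset_span (hg i))
  · intro hx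
    obtain ⟨m, c, g, rfl⟩ := Submodule.mem_span_set'.1 hx
    exact ⟨m, fun i => (c i : K), fun i => (g i : V), fun i => (c i).2, fun i => (g i).2, rfl⟩

/-- Elementwise maximality of a full lattice. -/
def MaxIn (O : Subring K) (Q : QuadraticForm K V) (L : Submodule O V) : Prop :=
  ∀ x, Q x ∈ O → (∀ y ∈ L, polar Q x y ∈ O) → x ∈ L

/-- Integral full lattices. -/
structure ILat (O : Subring K) (Q : QuadraticForm K V) (L : Submodule O V) : Prop where
  fg : L.FG
  full : Submodule.span K (L : Set V) = ⊤
  int : ∀ x ∈ L, Q x ∈ O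

theorem isLattice_iff (O : Subring K) (S : Set V) :
    IsLattice O S ↔ ∃ L : Submodule O V, L.FG ∧ (L : Set V) = S := by
  constructor
  · rintro ⟨t, rfl⟩
    exact ⟨Submodule.span O t, ⟨t, rfl⟩, (ospan_eq O _).symm⟩
  · rintro ⟨L, ⟨t, rfl⟩, rfl⟩
    exact ⟨t, (ospan_eq O _).symm⟩

theorem qsmul (O : Subring K) (Q : QuadraticForm K V) (a : O) (x : V) :
    Q (a • x) = (a : K) * a * Q x := by
  have : a • x = (a : K) • x := rfl
  rw [this, QuadraticMap.map_smul, smul_eq_mul]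

theorem psmul_left (O : Subring K) (Q : QuadraticForm K V) (a : O) (x y : V) :
    polar Q (a • x) y = (a : K) * polar Q x y := by
  have : a • x = (a : K) • x := rfl
  rw [this, QuadraticMap.polar_smul_left, smul_eq_mul]

theorem psmul_right (O : Subring K) (Q : QuadraticForm K V) (a : O) (x y : V) :
    polar Q x (a • y) = (a : K) * polar Q x y := by
  have : a • y = (a : K) • y := rfl
  rw [this, QuadraticMap.polar_smul_right, smul_eq_mul]

theorem polar_mem {O : Subring K} {Q : QuadraticForm K V} {L : Submodule O V}
    (h : ∀ x ∈ L, Q x ∈ O) {x y : V} (hx : x ∈ L) (hy : y ∈ L) : polar Q x y ∈ O :=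
  O.sub_mem (O.sub_mem (h _ (L.add_mem hx hy)) (h _ hx)) (h _ hy)

theorem int_sup {O : Subring K} {Q : QuadraticForm K V} {L : Submodule O V}
    (h : ∀ x ∈ L, Q x ∈ O) {x : V} (hx : Q x ∈ O) (hxy : ∀ y ∈ L, polar Q x y ∈ O) :
    ∀ z ∈ L ⊔ Submodule.span O {x}, Q z ∈ O := by
  intro z hz
  obtain ⟨y, hy, w, hw, rfl⟩ := Submodule.mem_sup.1 hz
  obtain ⟨a, rfl⟩ := Submodule.mem_span_singleton.1 hw
  rw [QuadraticMap.map_add Q, qsmul, psmul_right, polar_comm]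
  exact O.add_mem (O.add_mem (h _ hy) (O.mul_mem (O.mul_mem a.2 a.2) hx))
    (O.mul_mem a.2 (hxy _ hy))

theorem isMaximal_iff {O : Subring K} {Q : QuadraticForm K V} {L : Submodule O V}
    (h : ILat O Q L) : IsMaximal O Q (L : Set V) ↔ MaxIn O Q L := by
  constructor
  · rintro ⟨h1, h2⟩ x hx hxy
    have := h2 ((L ⊔ Submodule.span O {x} : Submodule O V) : Set V)
      ((isLattice_iff O _).2 ⟨_, h.fg.sup (Submodule.fg_span_singleton x), rfl⟩) ?_
      (fun y hy => (le_sup_left : L ≤ _) hy) (int_sup h.int hx hxy)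
    · have hx' : x ∈ ((L ⊔ Submodule.span O {x} : Submodule O V) : Set V) :=
        (le_sup_right : _ ≤ L ⊔ Submodule.span O {x}) (Submodule.mem_span_singleton_self x)
      rw [this] at hx'
      exact hx'
    · rw [h.full, eq_top_iff, ← h.full]
      exact Submodule.span_mono (fun y hy => (le_sup_left : L ≤ _) hy)
  · intro hM
    refine ⟨h.int, fun L' hL' _ hLL hi => ?_⟩
    obtain ⟨L', -, rfl⟩ := (isLattice_iff O _).1 hL'
    refine Set.Subset.antisymm (fun x hx => ?_) hLL
    exact hM x (hi x hx) fun y hy => polar_mem hi hx (hLL hy)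

/-- The singular radical of the reduction of an integral lattice. -/
def Sm (O : Subring K) (p : K) (Q : QuadraticForm K V) (N : Submodule O V) : Submodule O V where
  carrier := {x | x ∈ N ∧ p⁻¹ * Q x ∈ O ∧ ∀ y ∈ N, p⁻¹ * polar Q x y ∈ O}
  zero_mem' := by simp [N.zero_mem, O.zero_mem]
  add_mem' := by
    rintro x y ⟨hx, hx1, hx2⟩ ⟨hy, hy1, hy2⟩
    refine ⟨N.add_mem hx hy, ?_, fun z hz => ?_⟩
    · rw [QuadraticMap.map_add Q, mul_add, mul_add]
      exact O.add_mem (O.add_mem hx1 hy1) (hx2 _ hy)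
    · rw [QuadraticMap.polar_add_left, mul_add]
      exact O.add_mem (hx2 _ hz) (hy2 _ hz)
  smul_mem' := by
    rintro a x ⟨hx, hx1, hx2⟩
    refine ⟨N.smul_mem a hx, ?_, fun z hz => ?_⟩
    · rw [qsmul, mul_left_comm]
      exact O.mul_mem (O.mul_mem a.2 a.2) hx1
    · rw [psmul_left, mul_left_comm]
      exact O.mul_mem a.2 (hx2 _ hz)

theorem mem_Sm {O : Subring K} {p : K} {Q : QuadraticForm K V} {N : Submodule O V} {x : V} :
    x ∈ Sm O p Q N ↔ x ∈ N ∧ p⁻¹ * Q x ∈ O ∧ ∀ y ∈ N, p⁻¹ * polar Q x y ∈ O := Iff.rfl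

theorem Sm_le {O : Subring K} {p : K} {Q : QuadraticForm K V} {N : Submodule O V} :
    Sm O p Q N ≤ N := fun _ hx => hx.1

/-- The order of the quotient of a lattice by its singular radical. -/
def eCard (O : Subring K) (p : K) (Q : QuadraticForm K V) (N : Submodule O V) : ℕ :=
  Nat.card (N ⧸ (Sm O p Q N).submoduleOf N)

theorem eCard_eq_of_surj {O : Subring K} {p : K} {Q : QuadraticForm K V} {N : Submodule O V}
    {X : Type} [AddCommGroup X] [Module O X] (f : N →ₗ[O] X) (hf : Function.Surjective f)
    (hk : ∀ x : N, f x = 0 ↔ (x : V) ∈ Sm O p Q N) : eCard O p Q N = Nat.card X := by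
  have : LinearMap.ker f = (Sm O p Q N).submoduleOf N := by
    ext x; rw [LinearMap.mem_ker, hk]; rfl
  rw [eCard, ← this]
  exact Nat.card_congr (f.quotKerEquivOfSurjective hf).toEquiv

end generic
end QW

namespace QW
open QuadraticMap

/-- The properties of the ring of integers of a local field (with uniformizer `p`) which we use. -/
structure LD {K : Type} [Field K] (O : Subring K) (p : K) : Prop where
  p_mem : p ∈ O
  p_ne : p ≠ 0
  p_inv : p⁻¹ ∉ O
  val : ∀ x : K, x ≠ 0 → ∃ n : ℤ, x * p ^ n ∈ O ∧ (x * p ^ n)⁻¹ ∈ O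
  hens : ∀ a ∈ O, ∃ t ∈ O, p * t = (p * t) ^ 2 + p * a
  two : (2 : K) ≠ 0
  fin : Finite (O ⧸ Ideal.span {(⟨p, p_mem⟩ : O)})
  pid : IsPrincipalIdealRing O

namespace LD
section
variable {K : Type} [Field K] {O : Subring K} {p : K} (D : LD O p)
include D

theorem mem_or {x : K} (hx : x ≠ 0) : x ∈ O ∨ p⁻¹ * x⁻¹ ∈ O := by
  obtain ⟨n, h1, h2⟩ := D.val x hx
  have hp := D.p_ne
  rcases le_or_gt n 0 with hn | hn
  · left
    obtain ⟨k, rfl⟩ : ∃ k : ℕ, n = -(k:ℤ) := ⟨(-n).toNat, by omega⟩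
    have := O.mul_mem h1 (O.pow_mem D.p_mem k)
    rwa [zpow_neg, zpow_natCast, mul_assoc, inv_mul_cancel₀ (pow_ne_zero _ hp), mul_one] at this
  · right
    obtain ⟨k, rfl⟩ : ∃ k : ℕ, n = k + 1 := ⟨(n - 1).toNat, by omega⟩
    have := O.mul_mem h2 (O.pow_mem D.p_mem k)
    convert this using 1
    rw [zpow_add₀ hp, zpow_natCast, zpow_one]
    field_simp

theorem inv_mem {x : K} (hx : x ∈ O) (h : p⁻¹ * x ∉ O) : x⁻¹ ∈ O := by
  have hp := D.p_ne
  have hx0 : x ≠ 0 := by rintro rfl; simp [O.zero_mem] at h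
  rcases D.mem_or (mul_ne_zero (inv_ne_zero hp) hx0) with h' | h'
  · exact absurd h' h
  · convert h' using 1
    field_simp

theorem mem_of_p {x : K} (hx : p⁻¹ * x ∈ O) : x ∈ O := by
  have := O.mul_mem D.p_mem hx
  rwa [mul_inv_cancel_left₀ D.p_ne] at this

theorem one_not : p⁻¹ * 1 ∉ O := by simpa using D.p_inv

theorem pow_mem_of {x : K} : ∃ k : ℕ, p ^ k * x ∈ O := by
  by_cases hx : x = 0
  · exact ⟨0, by simp [hx, O.zero_mem]⟩
  obtain ⟨n, h1, h2⟩ := D.val x hx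
  refine ⟨n.toNat, ?_⟩
  have hp := D.p_ne
  obtain ⟨k, hk⟩ : ∃ k : ℕ, (n.toNat : ℤ) = n + k := ⟨(-n).toNat, by omega⟩
  have := O.mul_mem h1 (O.pow_mem D.p_mem k)
  convert this using 1
  rw [← zpow_natCast, hk, zpow_add₀ hp, zpow_natCast]; ring

theorem pow_mono {x : K} {k l : ℕ} (h : k ≤ l) (hx : p ^ k * x ∈ O) : p ^ l * x ∈ O := by
  obtain ⟨m, rfl⟩ := Nat.exists_eq_add_of_le h
  have := O.mul_mem (O.pow_mem D.p_mem m) hx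
  convert this using 1
  ring

theorem not_mem_of {x : K} (hx : x ≠ 0) : ∃ k : ℕ, (p ^ k)⁻¹ * x ∉ O := by
  by_contra! h
  obtain ⟨k, hk⟩ := D.pow_mem_of (x := x⁻¹)
  have h1 := O.mul_mem hk (h (k + 1))
  apply D.p_inv
  have hp := D.p_ne
  convert h1 using 1
  field_simp
  ring

variable {V : Type} [AddCommGroup V] [Module K V]

theorem psmul_mem {M : Submodule O V} {x : V} (hx : x ∈ M) : p • x ∈ M :=
  M.smul_mem (⟨p, D.p_mem⟩ : O) hx

theorem powsmul_mem {M : Submodule O V} {x : V} (k : ℕ) (hx : x ∈ M) : p ^ k • x ∈ M :=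
  M.smul_mem (⟨p ^ k, O.pow_mem D.p_mem k⟩ : O) hx

theorem bdd (f : V →ₗ[K] K) {M : Submodule O V} (hM : M.FG) : ∃ k : ℕ, ∀ m ∈ M, p ^ k * f m ∈ O := by
  induction M, hM using Submodule.fg_induction with
  | singleton x =>
    obtain ⟨k, hk⟩ := D.pow_mem_of (x := f x)
    refine ⟨k, fun m hm => ?_⟩
    obtain ⟨a, rfl⟩ := Submodule.mem_span_singleton.1 hm
    have : f (a • x) = (a : K) * f x := f.map_smul (a : K) x
    rw [this, mul_left_comm]
    exact O.mul_mem a.2 hk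
  | sup M₁ M₂ h₁ h₂ ih1 ih2 =>
    obtain ⟨k, hk⟩ := ih1
    obtain ⟨l, hl⟩ := ih2
    refine ⟨max k l, fun m hm => ?_⟩
    obtain ⟨y, hy, z, hz, rfl⟩ := Submodule.mem_sup.1 hm
    rw [map_add, mul_add]
    exact O.add_mem (D.pow_mono (le_max_left _ _) (hk y hy)) (D.pow_mono (le_max_right _ _) (hl z hz))

theorem not_inf_div {M : Submodule O V} (hM : M.FG) {x : V} (hx : x ≠ 0) :
    ∃ k : ℕ, (p ^ k)⁻¹ • x ∉ M := by
  obtain ⟨f, hf⟩ := Module.Projective.exists_dual_eq_one K hx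
  obtain ⟨k, hk⟩ := D.bdd f hM
  refine ⟨k + 1, fun h => D.p_inv ?_⟩
  have := hk _ h
  rw [map_smul, hf, smul_eq_mul, mul_one, pow_succ, mul_inv,
    mul_inv_cancel_left₀ (pow_ne_zero _ D.p_ne)] at this
  exact this

theorem scale_in {M : Submodule O V} (hM : Submodule.span K (M : Set V) = ⊤) (x : V) :
    ∃ k : ℕ, p ^ k • x ∈ M := by
  have hx : x ∈ Submodule.span K (M : Set V) := hM ▸ Submodule.mem_top
  induction hx using Submodule.span_induction with
  | mem x h => exact ⟨0, by simpa using h⟩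
  | zero => exact ⟨0, by simp⟩
  | add x y _ _ hx hy =>
    obtain ⟨k, hk⟩ := hx
    obtain ⟨l, hl⟩ := hy
    refine ⟨k + l, ?_⟩
    rw [smul_add]
    refine M.add_mem ?_ ?_
    · rw [add_comm, pow_add, mul_smul]; exact D.powsmul_mem l hk
    · rw [pow_add, mul_smul]; exact D.powsmul_mem k hl
  | smul a x _ hx =>
    obtain ⟨k, hk⟩ := hx
    obtain ⟨l, hl⟩ := D.pow_mem_of (x := a)
    refine ⟨l + k, ?_⟩
    have := M.smul_mem (⟨_, hl⟩ : O) hk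
    convert this using 1
    change _ = (p ^ l * a) • p ^ k • x
    simp only [smul_smul]; congr 1; ring

/-- The primitive multiple of a vector. -/
theorem exists_prim {M : Submodule O V} (hf : M.FG) (hM : Submodule.span K (M : Set V) = ⊤)
    {x : V} (hx : x ≠ 0) : ∃ a : K, a ≠ 0 ∧ a • x ∈ M ∧ p⁻¹ • a • x ∉ M := by
  classical
  obtain ⟨k, hk⟩ := D.scale_in hM x
  have hp := D.p_ne
  have hx' : p ^ k • x ≠ 0 := smul_ne_zero (pow_ne_zero _ hp) hx
  have hex := D.not_inf_div hf hx'
  have h0 : Nat.find hex ≠ 0 := by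
    intro h
    have := Nat.find_spec hex
    rw [h] at this
    simp [hk] at this
  obtain ⟨l, hl⟩ := Nat.exists_eq_succ_of_ne_zero h0
  refine ⟨(p ^ l)⁻¹ * p ^ k, mul_ne_zero (inv_ne_zero (pow_ne_zero _ hp)) (pow_ne_zero _ hp), ?_, ?_⟩
  · have := Nat.find_min hex (m := l) (by omega)
    rw [not_not] at this
    rwa [mul_smul]
  · have := Nat.find_spec hex
    rw [hl] at this
    convert this using 2
    rw [smul_smul, smul_smul, Nat.succ_eq_add_one, pow_succ, mul_inv, ← mul_assoc, mul_comm p⁻¹]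

/-- The basic consequence of Hensel's lemma. -/
theorem aniso_polar {Q : QuadraticForm K V} (hQ : ∀ x, Q x = 0 → x = 0) {x y : V} {b : K}
    (hb : b ≠ 0) (h1 : p⁻¹ * (Q x * Q y * (b⁻¹) ^ 2) ∈ O) : polar Q x y ≠ b := by
  intro hxy
  obtain ⟨t, ht, h⟩ := D.hens _ h1
  have hp := D.p_ne
  rw [mul_inv_cancel_left₀ hp] at h
  set s := p * t with hs
  have hs1 : s - 1 ≠ 0 := by
    intro h0
    apply D.p_inv
    have : p * t = 1 := by rw [← hs]; linear_combination h0
    rwa [show p⁻¹ = t from inv_eq_of_mul_eq_one_right this]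
  have hbs : b ^ 2 * s = b ^ 2 * s ^ 2 + Q x * Q y := by
    have : b ^ 2 * s = b ^ 2 * (s ^ 2 + Q x * Q y * (b⁻¹) ^ 2) := by rw [← h]
    rw [this]; field_simp
  -- the vector `Q y • x + (b (s-1)) • y` is isotropic
  have hz : Q (Q y • x + (b * (s - 1)) • y) = 0 := by
    rw [QuadraticMap.map_add Q, QuadraticMap.map_smul, QuadraticMap.map_smul, polar_smul_left,
      polar_smul_right, hxy]
    simp only [smul_eq_mul]
    linear_combination (- Q y) * hbs
  have h0 := hQ _ hz
  have hy : polar Q (Q y • x + (b * (s - 1)) • y) y = 0 := by rw [h0]; simp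
  rw [polar_add_left, polar_smul_left, polar_smul_left, hxy, QuadraticMap.polar_self] at hy
  simp only [smul_eq_mul, nsmul_eq_mul] at hy
  have hx : polar Q (Q y • x + (b * (s - 1)) • y) x = 0 := by rw [h0]; simp
  rw [polar_add_left, polar_smul_left, polar_smul_left, polar_comm Q y x, hxy,
    QuadraticMap.polar_self] at hx
  simp only [smul_eq_mul, nsmul_eq_mul] at hx
  push_cast at hx hy
  have hy' : Q y * (2 * s - 1) = 0 := by
    have : b * (Q y * (2 * s - 1)) = 0 := by linear_combination hy
    exact (mul_eq_zero.1 this).resolve_left hb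
  have hne : 2 * s - 1 ≠ 0 := by
    intro h0
    apply D.p_inv
    have : p * (2 * t) = 1 := by linear_combination h0 + 2 * hs.symm
    rw [show p⁻¹ = 2 * t from inv_eq_of_mul_eq_one_right this]
    exact O.mul_mem (by have := O.add_mem O.one_mem O.one_mem; rwa [one_add_one_eq_two] at this) ht
  have hQy := (mul_eq_zero.1 hy').resolve_right hne
  have : b * b * (s - 1) = 0 := by rw [hQy] at hx; linear_combination hx
  exact mul_ne_zero (mul_ne_zero hb hb) hs1 this
end
end LD
end QW

namespace QW
open QuadraticMap

section
variable {K : Type} [Field K] {V : Type} [AddCommGroup V] [Module K V]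

/-- The dual of a lattice with respect to the polar form. -/
def dualL (O : Subring K) (Q : QuadraticForm K V) (N : Submodule O V) : Submodule O V where
  carrier := {x | ∀ y ∈ N, polar Q x y ∈ O}
  zero_mem' := by simp [O.zero_mem]
  add_mem' := by
    intro x y hx hy z hz
    rw [polar_add_left]
    exact O.add_mem (hx z hz) (hy z hz)
  smul_mem' := by
    intro a x hx z hz
    rw [psmul_left]
    exact O.mul_mem a.2 (hx z hz)

theorem polar_span_zero {Q : QuadraticForm K V} {S : Set V} (hS : Submodule.span K S = ⊤) {x : V}
    (h : ∀ y ∈ S, polar Q x y = 0) (y : V) : polar Q x y = 0 := by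
  have hy : y ∈ Submodule.span K S := hS ▸ Submodule.mem_top
  induction hy using Submodule.span_induction with
  | mem y hy => exact h y hy
  | zero => simp
  | add y z _ _ h1 h2 => rw [polar_add_right, h1, h2, add_zero]
  | smul a y _ h1 => rw [polar_smul_right, h1, smul_zero]

end

namespace LD
section
variable {K : Type} [Field K] {O : Subring K} {p : K} (D : LD O p)
variable {V : Type} [AddCommGroup V] [Module K V]
include D

theorem dual_noeth [FiniteDimensional K V] {Q : QuadraticForm K V} (hQ : Nondeg Q)
    {N : Submodule O V} (hN : Submodule.span K (N : Set V) = ⊤) :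
    IsNoetherian O (dualL O Q N) := by
  have := D.pid
  have hfg : (Submodule.span K (N : Set V)).FG := IsNoetherian.noetherian _
  obtain ⟨s, hs, hs2⟩ := (Submodule.fg_span_iff_fg_span_finset_subset _).1 hfg
  rw [hN] at hs2
  let Φ : dualL O Q N →ₗ[O] (s → O) :=
    { toFun := fun x i => ⟨polar Q (x : V) (i : V), x.2 _ (hs i.2)⟩
      map_add' := by
        intro x y; ext i; simp [polar_add_left]
      map_smul' := by
        intro a x; ext i; simp; rfl }
  refine isNoetherian_of_injective Φ ?_
  rw [← LinearMap.ker_eq_bot, LinearMap.ker_eq_bot']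
  intro x hx
  ext
  refine hQ _ (polar_span_zero hs2.symm ?_)
  intro y hy
  have := congrFun hx ⟨y, hy⟩
  exact congrArg Subtype.val this

theorem fg_of_le_dual [FiniteDimensional K V] {Q : QuadraticForm K V} (hQ : Nondeg Q)
    {N M : Submodule O V} (hN : Submodule.span K (N : Set V) = ⊤) (hM : M ≤ dualL O Q N) : M.FG := by
  have := D.dual_noeth hQ hN
  have := IsNoetherian.noetherian (M.submoduleOf (dualL O Q N))
  have h2 := this.map (dualL O Q N).subtype
  rwa [Submodule.submoduleOf, Submodule.map_comap_subtype, inf_eq_right.2 hM] at h2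

theorem exists_max [FiniteDimensional K V] {Q : QuadraticForm K V} (hQ : Nondeg Q)
    {N : Submodule O V} (hN : ILat O Q N) : ∃ M, N ≤ M ∧ ILat O Q M ∧ MaxIn O Q M := by
  have := D.dual_noeth hQ hN.full
  have hle : ∀ M : Submodule O V, N ≤ M → (∀ x ∈ M, Q x ∈ O) → M ≤ dualL O Q N := by
    intro M h1 h2 x hx y hy
    exact polar_mem h2 hx (h1 hy)
  obtain ⟨P, ⟨hP1, hP2⟩, hP3⟩ := set_has_maximal_iff_noetherian.2 ‹IsNoetherian O (dualL O Q N)›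
    {P | N ≤ P.map (dualL O Q N).subtype ∧ ∀ x ∈ P.map (dualL O Q N).subtype, Q x ∈ O}
    ⟨N.submoduleOf _, by
      have h := hle N le_rfl hN.int
      rw [Set.mem_ofPred_eq, Submodule.submoduleOf, Submodule.map_comap_subtype, inf_eq_right.2 h]
      exact ⟨le_rfl, hN.int⟩⟩
  set M := P.map (dualL O Q N).subtype with hM
  have hfull : Submodule.span K (M : Set V) = ⊤ := by
    rw [eq_top_iff, ← hN.full]; exact Submodule.span_mono hP1
  refine ⟨M, hP1, ⟨D.fg_of_le_dual hQ hN.full (hle _ hP1 hP2), hfull, hP2⟩, ?_⟩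
  intro x hx hxy
  have hIntg := int_sup hP2 hx hxy
  set M' := M ⊔ Submodule.span O {x}
  have hM' : M ≤ M' := le_sup_left
  have hd := hle M' (hP1.trans hM') hIntg
  have hmap : (M'.submoduleOf (dualL O Q N)).map (dualL O Q N).subtype = M' := by
    rw [Submodule.submoduleOf, Submodule.map_comap_subtype, inf_eq_right.2 hd]
  have hnot := hP3 (M'.submoduleOf _) ⟨by rw [hmap]; exact hP1.trans hM', by rwa [hmap]⟩
  have hPle : P ≤ M'.submoduleOf (dualL O Q N) := by
    intro z hz
    exact hM' (Submodule.mem_map_of_mem hz)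
  have heq := eq_of_le_of_not_lt hPle hnot
  have : M = M' := by rw [← hmap, ← heq]
  rw [this]
  exact (le_sup_right : _ ≤ M') (Submodule.mem_span_singleton_self x)

theorem extend_one {Q : QuadraticForm K V} {N : Submodule O V} (hfg : N.FG)
    (hN : ∀ x ∈ N, Q x ∈ O) (x : V) : ∃ M : Submodule O V, N ≤ M ∧ M.FG ∧ (∀ x ∈ M, Q x ∈ O) ∧
      x ∈ Submodule.span K (M : Set V) := by
  obtain ⟨k, hk⟩ := D.bdd (QuadraticMap.polarBilin Q x) hfg
  obtain ⟨l, hl⟩ := D.pow_mem_of (x := Q x)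
  have hk' : ∀ m ∈ N, p ^ (k + l) * polar Q x m ∈ O :=
    fun m hm => D.pow_mono (Nat.le_add_right _ _) (hk m hm)
  have hl' := D.pow_mono (l := (k + l) + (k + l)) (by omega) hl
  refine ⟨N ⊔ Submodule.span O {p ^ (k + l) • x}, le_sup_left,
    hfg.sup (Submodule.fg_span_singleton _), int_sup hN ?_ ?_, ?_⟩
  · rw [QuadraticMap.map_smul, smul_eq_mul, ← pow_add]; exact hl'
  · intro y hy
    rw [polar_smul_left, smul_eq_mul]; exact hk' y hy
  · have h1 : p ^ (k + l) • x ∈ Submodule.span K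
        ((N ⊔ Submodule.span O {p ^ (k + l) • x} : Submodule O V) : Set V) :=
      Submodule.subset_span ((le_sup_right : _ ≤ N ⊔ Submodule.span O {p ^ (k + l) • x})
        (Submodule.mem_span_singleton_self _))
    have := Submodule.smul_mem _ (p ^ (k + l))⁻¹ h1
    rwa [smul_smul, inv_mul_cancel₀ (pow_ne_zero _ D.p_ne), one_smul] at this

theorem exists_full [FiniteDimensional K V] {Q : QuadraticForm K V} {N : Submodule O V}
    (hfg : N.FG) (hN : ∀ x ∈ N, Q x ∈ O) : ∃ M, N ≤ M ∧ ILat O Q M := by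
  classical
  have key : ∀ s : Finset V, ∃ M : Submodule O V, N ≤ M ∧ M.FG ∧ (∀ x ∈ M, Q x ∈ O) ∧
      ∀ x ∈ s, x ∈ Submodule.span K (M : Set V) := by
    intro s
    induction s using Finset.induction_on with
    | empty => exact ⟨N, le_rfl, hfg, hN, by simp⟩
    | insert a s _ ih =>
      obtain ⟨M, h1, h2, h3, h4⟩ := ih
      obtain ⟨M', h1', h2', h3', h4'⟩ := D.extend_one h2 h3 a
      refine ⟨M', h1.trans h1', h2', h3', fun x hx => ?_⟩
      rcases Finset.mem_insert.1 hx with rfl | hx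
      · exact h4'
      · exact Submodule.span_mono h1' (h4 x hx)
  obtain ⟨s, hs⟩ := (IsNoetherian.noetherian (⊤ : Submodule K V))
  obtain ⟨M, h1, h2, h3, h4⟩ := key s
  refine ⟨M, h1, h2, ?_, h3⟩
  rw [eq_top_iff, ← hs, Submodule.span_le]
  exact h4

theorem an_polar {Q : QuadraticForm K V} (hQ : ∀ x, Q x = 0 → x = 0) {x y : V} (hx : Q x ∈ O)
    (hy : Q y ∈ O) : polar Q x y ∈ O := by
  by_contra hb
  have hb0 : polar Q x y ≠ 0 := fun h => hb (h ▸ O.zero_mem)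
  have h1 := (D.mem_or hb0).resolve_left hb
  refine D.aniso_polar hQ hb0 ?_ rfl
  have := O.mul_mem (O.mul_mem hx hy) (O.mul_mem h1 (D.mem_of_p h1))
  convert this using 1
  ring

theorem an_polar' {Q : QuadraticForm K V} (hQ : ∀ x, Q x = 0 → x = 0) {x y : V}
    (hx : p⁻¹ * Q x ∈ O) (hy : Q y ∈ O) : p⁻¹ * polar Q x y ∈ O := by
  by_contra hb
  have hb0 : polar Q x y ≠ 0 := fun h => hb (by rw [h, mul_zero]; exact O.zero_mem)
  have h1 := D.inv_mem (D.an_polar hQ (D.mem_of_p hx) hy) hb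
  refine D.aniso_polar hQ hb0 ?_ rfl
  have := O.mul_mem (O.mul_mem hx hy) (O.mul_mem h1 h1)
  convert this using 1
  ring

theorem an_nondeg {Q : QuadraticForm K V} (hQ : ∀ x, Q x = 0 → x = 0) : Nondeg Q := by
  intro x hx
  apply hQ
  have := hx x
  rw [QuadraticMap.polar_self] at this
  simp only [nsmul_eq_mul] at this
  push_cast at this
  exact (mul_eq_zero.1 this).resolve_left D.two

/-- The unique maximal lattice of an anisotropic space. -/
def AA {Q : QuadraticForm K V} (hQ : ∀ x, Q x = 0 → x = 0) : Submodule O V where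
  carrier := {x | Q x ∈ O}
  zero_mem' := by simp [O.zero_mem]
  add_mem' := by
    intro x y hx hy
    change Q (x + y) ∈ O
    rw [QuadraticMap.map_add Q]
    exact O.add_mem (O.add_mem hx hy) (D.an_polar hQ hx hy)
  smul_mem' := by
    intro a x hx
    change Q (a • x) ∈ O
    rw [qsmul]
    exact O.mul_mem (O.mul_mem a.2 a.2) hx

theorem mem_AA {Q : QuadraticForm K V} (hQ : ∀ x, Q x = 0 → x = 0) {x : V} :
    x ∈ D.AA hQ ↔ Q x ∈ O := Iff.rfl

theorem AA_ilat [FiniteDimensional K V] {Q : QuadraticForm K V} (hQ : ∀ x, Q x = 0 → x = 0) :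
    ILat O Q (D.AA hQ) := by
  have hfull : Submodule.span K (D.AA hQ : Set V) = ⊤ := by
    rw [eq_top_iff]
    intro x _
    obtain ⟨k, hk⟩ := D.pow_mem_of (x := Q x)
    have h1 : p ^ k • x ∈ D.AA hQ := by
      rw [mem_AA, QuadraticMap.map_smul, smul_eq_mul, ← pow_add]
      exact D.pow_mono (by omega) hk
    have := Submodule.smul_mem _ (p ^ k)⁻¹ (Submodule.subset_span (R := K) (s := (D.AA hQ : Set V)) h1)
    rwa [smul_smul, inv_mul_cancel₀ (pow_ne_zero _ D.p_ne), one_smul] at this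
  refine ⟨D.fg_of_le_dual (D.an_nondeg hQ) hfull ?_, hfull, fun x hx => hx⟩
  intro x hx y hy
  exact D.an_polar hQ hx hy

theorem AA_max {Q : QuadraticForm K V} (hQ : ∀ x, Q x = 0 → x = 0) :
    MaxIn O Q (D.AA hQ) := fun _ hx _ => hx

theorem an_max_iff {Q : QuadraticForm K V} (hQ : ∀ x, Q x = 0 → x = 0) {M : Submodule O V}
    (hi : ∀ x ∈ M, Q x ∈ O) (hM : MaxIn O Q M) (x : V) : x ∈ M ↔ Q x ∈ O :=
  ⟨hi x, fun h => hM x h fun y hy => D.an_polar hQ h (hi y hy)⟩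

theorem mem_Sm_AA {Q : QuadraticForm K V} (hQ : ∀ x, Q x = 0 → x = 0) {x : V} :
    x ∈ Sm O p Q (D.AA hQ) ↔ p⁻¹ * Q x ∈ O := by
  refine ⟨fun h => h.2.1, fun h => ⟨D.mem_of_p h, h, fun y hy => D.an_polar' hQ h hy⟩⟩

end
end LD
end QW

namespace QW
open QuadraticMap

section
variable {K : Type} [Field K] {V : Type} [AddCommGroup V] [Module K V]

/-- A hyperbolic pair. -/
structure HP (Q : QuadraticForm K V) (x y : V) : Prop where
  x0 : Q x = 0
  y0 : Q y = 0
  xy : polar Q x y = 1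

/-- The orthogonal complement of two vectors. -/
def UU (Q : QuadraticForm K V) (x y : V) : Submodule K V :=
  LinearMap.ker (polarBilin Q x) ⊓ LinearMap.ker (polarBilin Q y)

theorem mem_UU {Q : QuadraticForm K V} {x y u : V} :
    u ∈ UU Q x y ↔ polar Q x u = 0 ∧ polar Q y u = 0 := by
  simp [UU]

/-- The restriction of the form to the orthogonal complement. -/
abbrev QU (Q : QuadraticForm K V) (U : Submodule K V) : QuadraticForm K U := Q.comp U.subtype

theorem polar_QU (Q : QuadraticForm K V) (U : Submodule K V) (u w : U) :
    polar (QU Q U) u w = polar Q (u : V) w := by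
  simp [polar]

theorem polar_self2 (Q : QuadraticForm K V) (x : V) : polar Q x x = 2 * Q x := by
  rw [QuadraticMap.polar_self]; simp

/-- Intersection of a lattice with a subspace. -/
abbrev MU {O : Subring K} (M : Submodule O V) (U : Submodule K V) : Submodule O U :=
  M.comap (U.subtype.restrictScalars O)

theorem mem_MU {O : Subring K} {M : Submodule O V} {U : Submodule K V} {u : U} :
    u ∈ MU M U ↔ (u : V) ∈ M := Iff.rfl

namespace HP
variable {Q : QuadraticForm K V} {x y : V} (h : HP Q x y)
include h

theorem yx : polar Q y x = 1 := by rw [polar_comm]; exact h.xy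
theorem xx : polar Q x x = 0 := by rw [polar_self2, h.x0, mul_zero]
theorem yy : polar Q y y = 0 := by rw [polar_self2, h.y0, mul_zero]

/-- Orthogonal projection to the complement of a hyperbolic plane. -/
def proj : V →ₗ[K] UU Q x y :=
  LinearMap.codRestrict (UU Q x y)
    (LinearMap.id - (polarBilin Q y).smulRight x - (polarBilin Q x).smulRight y) (by
      intro v
      rw [mem_UU]
      simp only [LinearMap.sub_apply, LinearMap.id_apply, LinearMap.smulRight_apply,
        polarBilin_apply_apply, polar_sub_right, polar_smul_right, h.xx, h.yy, h.xy, h.yx, smul_eq_mul]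
      constructor <;> ring)

theorem proj_val (v : V) : (h.proj v : V) = v - polar Q y v • x - polar Q x v • y := rfl

theorem decomp (v : V) : v = polar Q y v • x + polar Q x v • y + h.proj v := by
  rw [proj_val]; abel

theorem proj_self (u : UU Q x y) : h.proj u = u := by
  ext
  rw [proj_val, (mem_UU.1 u.2).1, (mem_UU.1 u.2).2]; simp

theorem proj_x : h.proj x = 0 := by
  ext
  rw [proj_val, h.xx, h.yx]; simp

theorem proj_y : h.proj y = 0 := by
  ext
  rw [proj_val, h.yy, h.xy]; simp

theorem polar_f (a b a' b' : K) (u u' : UU Q x y) :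
    polar Q (a • x + b • y + u) (a' • x + b' • y + u') = a * b' + b * a' + polar Q (u : V) u' := by
  simp only [polar_add_left, polar_add_right, polar_smul_left, polar_smul_right, h.xx, h.yy, h.xy,
    h.yx, smul_eq_mul, (mem_UU.1 u'.2).1, (mem_UU.1 u'.2).2, polar_comm Q u x, polar_comm Q u y,
    (mem_UU.1 u.2).1, (mem_UU.1 u.2).2]
  ring

theorem Q_f (a b : K) (u : UU Q x y) : Q (a • x + b • y + u) = a * b + Q (u : V) := by
  rw [QuadraticMap.map_add Q, QuadraticMap.map_add Q, polar_add_left]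
  simp only [QuadraticMap.map_smul, polar_smul_left, polar_smul_right, h.x0, h.y0, h.xy,
     (mem_UU.1 u.2).1, (mem_UU.1 u.2).2, smul_eq_mul]
  ring

/-- The decomposition of the space. -/
def equiv : ((K × K) × UU Q x y) ≃ₗ[K] V where
  toFun w := w.1.1 • x + w.1.2 • y + w.2
  map_add' w w' := by simp only [Prod.fst_add, Prod.snd_add, add_smul, Submodule.coe_add]; abel
  map_smul' a w := by simp [smul_smul, smul_add]
  invFun v := ((polar Q y v, polar Q x v), h.proj v)
  left_inv w := by
    obtain ⟨⟨a, b⟩, u⟩ := w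
    simp only [polar_add_right, polar_smul_right, h.xx, h.yy, h.xy, h.yx, (mem_UU.1 u.2).1,
      (mem_UU.1 u.2).2, map_add, map_smul, h.proj_x, h.proj_y, h.proj_self]
    simp
  right_inv v := (h.decomp v).symm

theorem finrank_UU [FiniteDimensional K V] :
    Module.finrank K (UU Q x y) + 2 = Module.finrank K V := by
  rw [← h.equiv.finrank_eq, Module.finrank_prod, Module.finrank_prod, Module.finrank_self]; ring

theorem nondeg (hQ : Nondeg Q) : Nondeg (QU Q (UU Q x y)) := by
  intro u hu
  ext
  apply hQ
  intro v
  rw [h.decomp v]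
  have := h.polar_f 0 0 (polar Q y v) (polar Q x v) u (h.proj v)
  simp only [zero_smul, zero_add, zero_mul] at this
  rw [this, ← polar_QU]
  exact hu _

variable {O : Subring K} {M : Submodule O V}

theorem mem_iff (hi : ∀ m ∈ M, Q m ∈ O) (hx : x ∈ M) (hy : y ∈ M) (v : V) :
    v ∈ M ↔ polar Q y v ∈ O ∧ polar Q x v ∈ O ∧ (h.proj v : V) ∈ M := by
  constructor
  · intro hv
    have h1 := polar_mem hi hy hv
    have h2 := polar_mem hi hx hv
    refine ⟨h1, h2, ?_⟩
    rw [proj_val]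
    exact M.sub_mem (M.sub_mem hv (M.smul_mem (⟨_, h1⟩ : O) hx)) (M.smul_mem (⟨_, h2⟩ : O) hy)
  · rintro ⟨h1, h2, h3⟩
    rw [h.decomp v]
    exact M.add_mem (M.add_mem (M.smul_mem (⟨_, h1⟩ : O) hx) (M.smul_mem (⟨_, h2⟩ : O) hy)) h3

theorem maxU (hi : ∀ m ∈ M, Q m ∈ O) (hx : x ∈ M) (hy : y ∈ M) (hM : MaxIn O Q M) :
    MaxIn O (QU Q (UU Q x y)) (MU M (UU Q x y)) := by
  intro u hu huy
  refine hM (u : V) hu fun m hm => ?_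
  rw [h.decomp m]
  have := h.polar_f 0 0 (polar Q y m) (polar Q x m) u (h.proj m)
  simp only [zero_smul, zero_add, zero_mul] at this
  rw [this, ← polar_QU]
  exact huy _ ((h.mem_iff hi hx hy m).1 hm).2.2

theorem ilatU [FiniteDimensional K V] {p : K} (D : LD O p) (hQ : Nondeg Q) (hi : ILat O Q M) :
    ILat O (QU Q (UU Q x y)) (MU M (UU Q x y)) := by
  have hIntg : ∀ u ∈ MU M (UU Q x y), QU Q (UU Q x y) u ∈ O := fun u hu => hi.int _ hu
  have hfull : Submodule.span K (MU M (UU Q x y) : Set (UU Q x y)) = ⊤ := by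
    rw [eq_top_iff]
    intro u _
    obtain ⟨k, hk⟩ := D.scale_in hi.full (u : V)
    have h1 : p ^ k • u ∈ MU M (UU Q x y) := hk
    have := Submodule.smul_mem _ (p ^ k)⁻¹ (Submodule.subset_span (R := K)
      (s := (MU M (UU Q x y) : Set (UU Q x y))) h1)
    rwa [smul_smul, inv_mul_cancel₀ (pow_ne_zero _ D.p_ne), one_smul] at this
  exact ⟨D.fg_of_le_dual (h.nondeg hQ) hfull fun u hu w hw => polar_mem hIntg hu hw, hfull, hIntg⟩

end HP

theorem LD.exists_HP {O : Subring K} {p : K} (D : LD O p) {Q : QuadraticForm K V}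
    {M : Submodule O V} (hi : ILat O Q M) (hM : MaxIn O Q M) {x0 : V} (hx0 : x0 ≠ 0)
    (hq : Q x0 = 0) : ∃ (a : K) (y : V), a ≠ 0 ∧ a • x0 ∈ M ∧ y ∈ M ∧ HP Q (a • x0) y := by
  obtain ⟨a, ha, h1, h2⟩ := D.exists_prim hi.fg hi.full hx0
  have hqx : Q (a • x0) = 0 := by rw [QuadraticMap.map_smul, hq, smul_zero]
  set x := a • x0
  have hm : ∃ m ∈ M, p⁻¹ * polar Q x m ∉ O := by
    by_contra! hcon
    apply h2
    refine hM _ ?_ fun m hm => ?_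
    · rw [QuadraticMap.map_smul, hqx, smul_zero]; exact O.zero_mem
    · rw [polar_smul_left]; exact hcon m hm
  obtain ⟨m0, hm0, hm1⟩ := hm
  have hne : polar Q x m0 ≠ 0 := by
    intro h; rw [h, mul_zero] at hm1; exact hm1 O.zero_mem
  have hinv := D.inv_mem (polar_mem hi.int h1 hm0) hm1
  obtain ⟨m, hm, hxm⟩ : ∃ m ∈ M, polar Q x m = 1 := by
    refine ⟨(polar Q x m0)⁻¹ • m0, M.smul_mem (⟨_, hinv⟩ : O) hm0, ?_⟩
    rw [polar_smul_right, smul_eq_mul, inv_mul_cancel₀ hne]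
  have hxx : polar Q x x = 0 := by rw [polar_self2, hqx, mul_zero]
  refine ⟨a, m - Q m • x, ha, h1, M.sub_mem hm (M.smul_mem (⟨_, hi.int m hm⟩ : O) h1), hqx, ?_, ?_⟩
  · rw [sub_eq_add_neg, QuadraticMap.map_add Q, QuadraticMap.map_neg, QuadraticMap.map_smul,
      polar_neg_right, polar_smul_right, polar_comm, hqx, hxm]
    simp
  · change polar Q x _ = 1
    rw [polar_sub_right, polar_smul_right, hxx, hxm]; simp

theorem isom_polar {V' : Type} [AddCommGroup V'] [Module K V'] {Q : QuadraticForm K V}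
    {Q' : QuadraticForm K V'} {ε : V →ₗ[K] V'} (hε : ∀ x, Q' (ε x) = Q x) (x y : V) :
    polar Q' (ε x) (ε y) = polar Q x y := by
  simp only [polar, ← map_add, hε]

theorem isom_inj {V' : Type} [AddCommGroup V'] [Module K V'] {Q : QuadraticForm K V}
    {Q' : QuadraticForm K V'} (hQ : Nondeg Q) {ε : V →ₗ[K] V'} (hε : ∀ x, Q' (ε x) = Q x) :
    Function.Injective ε := by
  rw [← LinearMap.ker_eq_bot, LinearMap.ker_eq_bot']
  intro x hx
  apply hQ
  intro y
  rw [← isom_polar hε, hx]; simp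

end

section
variable {K : Type} [Field K]

theorem LD.rep_max {O : Subring K} {p : K} (D : LD O p) : ∀ (n : ℕ) (V V' : Type) [AddCommGroup V]
    [Module K V] [AddCommGroup V'] [Module K V'] [FiniteDimensional K V] [FiniteDimensional K V']
    (Q : QuadraticForm K V) (Q' : QuadraticForm K V') (N : Submodule O V) (M : Submodule O V')
    (ε : V →ₗ[K] V'), Module.finrank K V = n → Module.finrank K V' = n → Nondeg Q → Nondeg Q' →
    (∀ x, Q' (ε x) = Q x) → ILat O Q N → MaxIn O Q N → ILat O Q' M → MaxIn O Q' M →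
    ∃ g : V →ₗ[K] V', (∀ x, Q' (g x) = Q x) ∧ ∀ x ∈ N, g x ∈ M := by
  intro n
  induction n using Nat.strong_induction_on with
  | _ n ih =>
  intro V V' _ _ _ _ _ _ Q Q' N M ε hV hV' hQ hQ' hε hN hNm hM hMm
  have hinj := isom_inj hQ hε
  by_cases han : ∀ x, Q x = 0 → x = 0
  · refine ⟨ε, hε, fun x hx => ?_⟩
    have hsurj : Function.Surjective ε :=
      (LinearMap.injective_iff_surjective_of_finrank_eq_finrank (hV.trans hV'.symm)).1 hinj
    have han' : ∀ x, Q' x = 0 → x = 0 := by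
      intro x hx
      obtain ⟨z, rfl⟩ := hsurj x
      rw [hε] at hx
      rw [han z hx, map_zero]
    rw [D.an_max_iff han' hM.int hMm, hε]
    exact hN.int x hx
  · push Not at han
    obtain ⟨x0, hq, hx0⟩ := han
    obtain ⟨a, y, ha, hx, hy, h⟩ := D.exists_HP hN hNm hx0 hq
    obtain ⟨a', y', ha', hx', hy', h'⟩ := D.exists_HP hM hMm
      ((map_ne_zero_iff ε hinj).2 hx0) ((hε x0).trans hq)
    set x := a • x0 with hxdef
    set x' := a' • ε x0 with hxdef'
    -- the isometry of the complements
    have hxx' : x' = (a' * a⁻¹) • ε x := by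
      rw [hxdef, hxdef', map_smul, smul_smul, mul_assoc, inv_mul_cancel₀ ha, mul_one]
    have hux : ∀ u : UU Q x y, polar Q' x' (ε u) = 0 := by
      intro u
      rw [hxx', polar_smul_left, isom_polar hε, (mem_UU.1 u.2).1, smul_zero]
    let η : UU Q x y →ₗ[K] UU Q' x' y' := h'.proj ∘ₗ ε ∘ₗ (UU Q x y).subtype
    have hη : ∀ u, QU Q' (UU Q' x' y') (η u) = QU Q (UU Q x y) u := by
      intro u
      have := h'.Q_f (polar Q' y' (ε u)) (polar Q' x' (ε u)) (h'.proj (ε u))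
      rw [← h'.decomp, hux, mul_zero, zero_add, hε] at this
      exact this.symm
    obtain ⟨g1, hg1, hg2⟩ := ih (Module.finrank K (UU Q x y))
      (by have := h.finrank_UU; omega) (UU Q x y) (UU Q' x' y') (QU Q _) (QU Q' _)
      (MU N _) (MU M _) η rfl (by have := h.finrank_UU; have := h'.finrank_UU; omega)
      (h.nondeg hQ) (h'.nondeg hQ') hη (h.ilatU D hQ hN) (h.maxU hN.int hx hy hNm)
      (h'.ilatU D hQ' hM) (h'.maxU hM.int hx' hy' hMm)
    refine ⟨(polarBilin Q y).smulRight x' + (polarBilin Q x).smulRight y' +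
      (UU Q' x' y').subtype ∘ₗ g1 ∘ₗ h.proj, ?_, ?_⟩
    · intro v
      have e1 := h'.Q_f (polar Q y v) (polar Q x v) (g1 (h.proj v))
      have e2 := h.Q_f (polar Q y v) (polar Q x v) (h.proj v)
      rw [← h.decomp] at e2
      rw [e2]
      refine e1.trans ?_
      congr 1
      exact hg1 _
    · intro v hv
      obtain ⟨h1, h2, h3⟩ := (h.mem_iff hN.int hx hy v).1 hv
      exact M.add_mem (M.add_mem (M.smul_mem (⟨_, h1⟩ : O) hx') (M.smul_mem (⟨_, h2⟩ : O) hy'))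
        (hg2 _ h3)

/-- Maximal lattices are ADC. -/
theorem LD.adc_of_max {O : Subring K} {p : K} (D : LD O p) {V : Type} [AddCommGroup V]
    [Module K V] [FiniteDimensional K V] {Q : QuadraticForm K V} (hQ : Nondeg Q)
    {L : Submodule O V} (hL : ILat O Q L) (hLm : MaxIn O Q L) (n : ℕ) :
    IsADC O Q (L : Set V) n := by
  intro W _ _ Q' hQ' _ N hN hNi ⟨σ, hσ, hσ'⟩
  obtain ⟨N, hNfg, rfl⟩ := (isLattice_iff O N).1 hN.1
  obtain ⟨N1, h1, hN1⟩ := D.exists_full (Q := Q) (N := N.map (σ.restrictScalars O)) (hNfg.map _) (by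
    rintro _ ⟨x, hx, rfl⟩
    change Q (σ x) ∈ O
    rw [hσ']; exact hNi x hx)
  obtain ⟨N2, h2, hN2, hN2m⟩ := D.exists_max hQ hN1
  obtain ⟨g, hg, hg'⟩ := D.rep_max _ V V Q Q N2 L LinearMap.id rfl rfl hQ hQ (fun _ => rfl)
    hN2 hN2m hL hLm
  refine ⟨g ∘ₗ σ, (isom_inj hQ hg).comp hσ, fun x => (hg _).trans (hσ' x), ?_⟩
  rintro _ ⟨x, hx, rfl⟩
  exact hg' _ (h2 (h1 ⟨x, hx, rfl⟩))

end
end QW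

namespace QW
open QuadraticMap

section
variable {K : Type} [Field K] {V : Type} [AddCommGroup V] [Module K V]

/-- `(V,Q)` represents an `n`-dimensional space having a maximal lattice with invariant `c`. -/
def Hyp (O : Subring K) (p : K) (Q : QuadraticForm K V) (n c : ℕ) : Prop :=
  ∃ (W : Type) (_ : AddCommGroup W) (_ : Module K W) (Q' : QuadraticForm K W) (N : Submodule O W),
    Nondeg Q' ∧ Module.finrank K W = n ∧ ILat O Q' N ∧ MaxIn O Q' N ∧
    (∃ σ : W →ₗ[K] V, ∀ x, Q (σ x) = Q' x) ∧ eCard O p Q' N = c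

theorem LD.total {O : Subring K} {p : K} (D : LD O p) (u w : K) :
    (∃ a ∈ O, u = a * w) ∨ (∃ a ∈ O, w = a * u) := by
  by_cases hu : u = 0
  · exact Or.inl ⟨0, O.zero_mem, by simp [hu]⟩
  by_cases hw : w = 0
  · exact Or.inr ⟨0, O.zero_mem, by simp [hw]⟩
  rcases D.mem_or (div_ne_zero hu hw) with h | h
  · exact Or.inl ⟨_, h, by field_simp⟩
  · refine Or.inr ⟨_, D.mem_of_p h, by field_simp⟩

theorem LD.exists_gen {O : Subring K} {p : K} (D : LD O p) (f : V →ₗ[K] K) {M : Submodule O V}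
    (hM : M.FG) : ∃ m0 ∈ M, ∀ m ∈ M, ∃ a ∈ O, f m = a * f m0 := by
  induction M, hM using Submodule.fg_induction with
  | singleton x =>
    refine ⟨x, Submodule.mem_span_singleton_self x, fun m hm => ?_⟩
    obtain ⟨a, rfl⟩ := Submodule.mem_span_singleton.1 hm
    exact ⟨a, a.2, f.map_smul (a : K) x⟩
  | sup M₁ M₂ h₁ h₂ ih1 ih2 =>
    obtain ⟨m1, hm1, e1⟩ := ih1
    obtain ⟨m2, hm2, e2⟩ := ih2
    have l1 : M₁ ≤ M₁ ⊔ M₂ := le_sup_left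
    have l2 : M₂ ≤ M₁ ⊔ M₂ := le_sup_right
    rcases D.total (f m1) (f m2) with ⟨c, hc, h⟩ | ⟨c, hc, h⟩
    · refine ⟨m2, l2 hm2, fun m hm => ?_⟩
      obtain ⟨y, hy, z, hz, rfl⟩ := Submodule.mem_sup.1 hm
      obtain ⟨a, ha, ea⟩ := e1 y hy
      obtain ⟨b, hb, eb⟩ := e2 z hz
      refine ⟨a * c + b, O.add_mem (O.mul_mem ha hc) hb, ?_⟩
      rw [map_add, ea, eb, h]; ring
    · refine ⟨m1, l1 hm1, fun m hm => ?_⟩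
      obtain ⟨y, hy, z, hz, rfl⟩ := Submodule.mem_sup.1 hm
      obtain ⟨a, ha, ea⟩ := e1 y hy
      obtain ⟨b, hb, eb⟩ := e2 z hz
      refine ⟨a + b * c, O.add_mem ha (O.mul_mem hb hc), ?_⟩
      rw [map_add, ea, eb, h]; ring

theorem exists_ker [FiniteDimensional K V] {R : Submodule K V}
    (h : Module.finrank K R + 1 = Module.finrank K V) :
    ∃ f : V →ₗ[K] K, f ≠ 0 ∧ LinearMap.ker f = R := by
  have hR : R < ⊤ := by
    rw [lt_top_iff_ne_top]
    rintro rfl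
    rw [finrank_top] at h; omega
  obtain ⟨f, hf, hfR⟩ := Submodule.exists_le_ker_of_lt_top R hR
  refine ⟨f, hf, (Submodule.eq_of_le_of_finrank_eq hfR ?_).symm⟩
  have h1 := LinearMap.finrank_range_add_finrank_ker f
  have h2 : LinearMap.range f = ⊤ := LinearMap.range_eq_top.2 (LinearMap.surjective hf)
  rw [h2, finrank_top, Module.finrank_self] at h1
  omega

/-- The key lemma. -/
theorem LD.key {O : Subring K} {p : K} (D : LD O p) [FiniteDimensional K V]
    {Q : QuadraticForm K V} {n : ℕ} (hdim : Module.finrank K V = n + 1)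
    {L M : Submodule O V} (hM : ILat O Q M) (hLM : L ≤ M) (hne : L ≠ M)
    (hL : IsADC O Q (L : Set V) n) {c : ℕ} (hc : Hyp O p Q n c) : c = eCard O p Q L := by
  obtain ⟨W, _, _, Q', N, hQ', hW, hN, hNm, ⟨σ0, hσ0⟩, rfl⟩ := hc
  obtain ⟨σ, hσ, hσQ, hσL⟩ := hL W Q' hQ' hW (N : Set W)
    ⟨(isLattice_iff O _).2 ⟨N, hN.fg, rfl⟩, hN.full⟩ hN.int ⟨σ0, isom_inj hQ' hσ0, hσ0⟩
  have hσL : ∀ w ∈ N, σ w ∈ L := fun w hw => hσL ⟨w, hw, rfl⟩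
  obtain ⟨f, hf0, hf⟩ := exists_ker (R := LinearMap.range σ)
    (by rw [LinearMap.finrank_range_of_inj hσ, hW, hdim])
  have hp := D.p_ne
  -- a generator of the values of `f` on `M`
  obtain ⟨m0, hm0, hgen⟩ := D.exists_gen f hM.fg
  have hfm0 : f m0 ≠ 0 := by
    intro h0
    apply hf0
    have : (M : Set V) ⊆ LinearMap.ker f := by
      intro m hm
      obtain ⟨a, -, e⟩ := hgen m hm
      simp [e, h0]
    have h2 := Submodule.span_le.2 this
    rw [hM.full] at h2
    exact LinearMap.ker_eq_top.1 (top_le_iff.1 h2)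
  have hker : ∀ m ∈ M, f m = 0 → ∃ w ∈ N, σ w = m := by
    intro m hm h0
    have : m ∈ LinearMap.range σ := by rw [← hf]; exact h0
    obtain ⟨w, rfl⟩ := this
    refine ⟨w, hNm w ?_ fun y hy => ?_, rfl⟩
    · rw [← hσQ]; exact hM.int _ hm
    · rw [← isom_polar hσQ]; exact polar_mem hM.int hm (hLM (hσL y hy))
  have hfL : ∀ l ∈ L, ∃ a ∈ O, f l = p * a * f m0 := by
    intro l hl
    obtain ⟨a, ha, e⟩ := hgen l (hLM hl)
    by_cases hpa : p⁻¹ * a ∈ O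
    · exact ⟨_, hpa, by rw [e, mul_inv_cancel_left₀ hp]⟩
    · exfalso
      apply hne
      refine le_antisymm hLM fun m hm => ?_
      have hinv := D.inv_mem ha hpa
      have ha0 : a ≠ 0 := by
        rintro rfl; rw [mul_zero] at hpa; exact hpa O.zero_mem
      obtain ⟨b, hb, e'⟩ := hgen m hm
      have hz : (b * a⁻¹) • l ∈ L := L.smul_mem (⟨_, O.mul_mem hb hinv⟩ : O) hl
      obtain ⟨w, hw, ew⟩ := hker (m - (b * a⁻¹) • l) (M.sub_mem hm (hLM hz)) (by
        rw [map_sub, map_smul, e, e', smul_eq_mul]; field_simp; ring)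
      have : m = σ w + (b * a⁻¹) • l := by rw [ew]; abel
      rw [this]
      exact L.add_mem (hσL w hw) hz
  have hdec : ∀ l ∈ L, ∃ w ∈ N, ∃ z ∈ M, l = σ w + p • z := by
    intro l hl
    obtain ⟨a, ha, e⟩ := hfL l hl
    have hz : a • m0 ∈ M := M.smul_mem (⟨_, ha⟩ : O) hm0
    obtain ⟨w, hw, ew⟩ := hker (l - p • a • m0) (M.sub_mem (hLM hl) (D.psmul_mem hz)) (by
      rw [map_sub, map_smul, map_smul, e]; simp only [smul_eq_mul]; ring)
    exact ⟨w, hw, _, hz, by rw [ew]; abel⟩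
  let φ : N →ₗ[O] L ⧸ (Sm O p Q L).submoduleOf L :=
    ((Sm O p Q L).submoduleOf L).mkQ ∘ₗ
      (LinearMap.codRestrict L ((σ.restrictScalars O) ∘ₗ N.subtype) fun w => hσL _ w.2)
  refine eCard_eq_of_surj φ ?_ ?_
  · intro q
    obtain ⟨⟨l, hl⟩, rfl⟩ := Submodule.mkQ_surjective _ q
    obtain ⟨w, hw, z, hz, rfl⟩ := hdec l hl
    refine ⟨⟨w, hw⟩, ?_⟩
    refine (Submodule.Quotient.eq _).2 ?_
    change σ w - (σ w + p • z) ∈ Sm O p Q L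
    have hpz : p • z ∈ Sm O p Q L := by
      refine ⟨?_, ?_, fun y hy => ?_⟩
      · have := L.sub_mem hl (hσL w hw)
        rwa [add_sub_cancel_left] at this
      · rw [QuadraticMap.map_smul, smul_eq_mul, mul_assoc, inv_mul_cancel_left₀ hp]
        exact O.mul_mem D.p_mem (hM.int z hz)
      · rw [polar_smul_left, smul_eq_mul, inv_mul_cancel_left₀ hp]
        exact polar_mem hM.int hz (hLM hy)
    rw [sub_add_cancel_left]
    exact Submodule.neg_mem _ hpz
  · intro w
    have : φ w = 0 ↔ σ w ∈ Sm O p Q L := by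
      refine (Submodule.Quotient.mk_eq_zero _).trans ?_
      rfl
    rw [this]
    constructor
    · rintro ⟨-, h1, h2⟩
      refine ⟨w.2, by rwa [hσQ] at h1, fun y hy => ?_⟩
      rw [← isom_polar hσQ]
      exact h2 _ (hσL y hy)
    · rintro ⟨-, h1, h2⟩
      refine ⟨hσL _ w.2, by rwa [hσQ], fun l hl => ?_⟩
      obtain ⟨w', hw', z, hz, rfl⟩ := hdec l hl
      rw [polar_add_right, polar_smul_right, isom_polar hσQ, mul_add, smul_eq_mul,
        inv_mul_cancel_left₀ hp]
      exact O.add_mem (h2 _ hw') (polar_mem hM.int (hLM (hσL _ w.2)) hz)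

end
end QW

namespace QW
open QuadraticMap

section
variable {K : Type} [Field K] {V : Type} [AddCommGroup V] [Module K V]
variable {V' : Type} [AddCommGroup V'] [Module K V']

theorem nondeg_prod {Q : QuadraticForm K V} {Q' : QuadraticForm K V'} (h : Nondeg Q)
    (h' : Nondeg Q') : Nondeg (Q.prod Q') := by
  intro x hx
  ext
  · refine h _ fun y => ?_
    have := hx (y, 0)
    simpa [polar_prod] using this
  · refine h' _ fun y => ?_
    have := hx (0, y)
    simpa [polar_prod] using this

variable {O : Subring K}

theorem ilat_prod {Q : QuadraticForm K V} {Q' : QuadraticForm K V'} {N : Submodule O V}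
    {N' : Submodule O V'} (h : ILat O Q N) (h' : ILat O Q' N') :
    ILat O (Q.prod Q') (N.prod N') := by
  refine ⟨h.fg.prod h'.fg, ?_, ?_⟩
  · rw [eq_top_iff]
    rintro ⟨x, y⟩ -
    have hx : x ∈ Submodule.span K (N : Set V) := h.full ▸ Submodule.mem_top
    have hy : y ∈ Submodule.span K (N' : Set V') := h'.full ▸ Submodule.mem_top
    have h1 : Submodule.span K (N : Set V) ≤ (Submodule.span K ((N.prod N' : Submodule O (V × V')) :
        Set (V × V'))).comap (LinearMap.inl K V V') := by
      rw [Submodule.span_le]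
      intro z hz
      exact Submodule.subset_span (Submodule.mem_prod.2 ⟨hz, N'.zero_mem⟩)
    have h2 : Submodule.span K (N' : Set V') ≤ (Submodule.span K ((N.prod N' : Submodule O (V × V')) :
        Set (V × V'))).comap (LinearMap.inr K V V') := by
      rw [Submodule.span_le]
      intro z hz
      exact Submodule.subset_span (Submodule.mem_prod.2 ⟨N.zero_mem, hz⟩)
    have h3 := h1 hx
    have h4 := h2 hy
    rw [Submodule.mem_comap] at h3 h4
    have := Submodule.add_mem _ h3 h4
    rwa [LinearMap.inl_apply, LinearMap.inr_apply, Prod.mk_add_mk, add_zero, zero_add] at this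
  · rintro ⟨x, y⟩ hxy
    rw [prod_apply]
    exact O.add_mem (h.int _ hxy.1) (h'.int _ hxy.2)

/-- First projection of a product lattice. -/
def pa (N : Submodule O V) (N' : Submodule O V') : (N.prod N' : Submodule O (V × V')) →ₗ[O] N :=
  LinearMap.codRestrict N (LinearMap.fst O V V' ∘ₗ (N.prod N').subtype) fun x => x.2.1

/-- Second projection of a product lattice. -/
def pb (N : Submodule O V) (N' : Submodule O V') : (N.prod N' : Submodule O (V × V')) →ₗ[O] N' :=
  LinearMap.codRestrict N' (LinearMap.snd O V V' ∘ₗ (N.prod N').subtype) fun x => x.2.2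

theorem eCard_prod_aux {p : K} {N : Submodule O V} {N' : Submodule O V'}
    {Q : QuadraticForm K (V × V')} {X X' : Type} [AddCommGroup X] [Module O X] [AddCommGroup X']
    [Module O X'] (f : N →ₗ[O] X) (g : N' →ₗ[O] X') (hf : Function.Surjective f)
    (hg : Function.Surjective g) (h : ∀ (x : N) (y : N'), (f x = 0 ∧ g y = 0) ↔
      ((x : V), (y : V')) ∈ Sm O p Q (N.prod N')) :
    eCard O p Q (N.prod N') = Nat.card X * Nat.card X' := by
  rw [← Nat.card_prod]
  refine eCard_eq_of_surj ((f ∘ₗ pa N N').prod (g ∘ₗ pb N N')) ?_ ?_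
  · rintro ⟨x, x'⟩
    obtain ⟨z, rfl⟩ := hf x
    obtain ⟨z', rfl⟩ := hg x'
    exact ⟨⟨((z : V), (z' : V')), z.2, z'.2⟩, rfl⟩
  · intro x
    rw [← h ⟨x.1.1, x.2.1⟩ ⟨x.1.2, x.2.2⟩, LinearMap.prod_apply]
    exact Prod.mk_eq_zero

/-- The lattice `O` in `K`. -/
def o1 (O : Subring K) : Submodule O K where
  carrier := {x | x ∈ O}
  zero_mem' := O.zero_mem
  add_mem' := O.add_mem
  smul_mem' := fun a _ hx => O.mul_mem a.2 hx

theorem mem_o1 {x : K} : x ∈ o1 O ↔ x ∈ O := Iff.rfl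

theorem o1_fg : (o1 O).FG := by
  refine ⟨{1}, ?_⟩
  ext x
  rw [Finset.coe_singleton, Submodule.mem_span_singleton]
  constructor
  · rintro ⟨a, rfl⟩
    exact (o1 O).smul_mem a O.one_mem
  · intro hx
    exact ⟨⟨x, hx⟩, mul_one x⟩

theorem o1_full : Submodule.span K (o1 O : Set K) = ⊤ := by
  rw [eq_top_iff]
  intro x _
  have h1 : (1 : K) ∈ Submodule.span K (o1 O : Set K) := Submodule.subset_span O.one_mem
  have := Submodule.smul_mem _ x h1
  rwa [smul_eq_mul, mul_one] at this

/-- The unary form. -/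
def Q1 (c : K) : QuadraticForm K K := c • QuadraticMap.sq

theorem Q1_apply (c x : K) : Q1 c x = c * (x * x) := by simp [Q1]

theorem Q1_polar (c x y : K) : polar (Q1 c) x y = 2 * c * x * y := by
  simp only [polar, Q1_apply]; ring

theorem Q1_ilat {c : K} (hc : c ∈ O) : ILat O (Q1 c) (o1 O) :=
  ⟨o1_fg, o1_full, fun x hx => by
    rw [Q1_apply]; exact O.mul_mem hc (O.mul_mem hx hx)⟩

theorem Q1_nondeg {c : K} (hc : c ≠ 0) (h2 : (2 : K) ≠ 0) : Nondeg (Q1 c) := by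
  intro x hx
  have := hx 1
  rw [Q1_polar] at this
  simpa [hc, h2] using this

/-- The hyperbolic plane. -/
def QH : QuadraticForm K (K × K) :=
  QuadraticMap.linMulLin (LinearMap.fst K K K) (LinearMap.snd K K K)

theorem QH_apply (x : K × K) : QH x = x.1 * x.2 := by simp [QH]

theorem QH_polar (x y : K × K) : polar QH x y = x.1 * y.2 + x.2 * y.1 := by
  simp only [polar, QH_apply, Prod.fst_add, Prod.snd_add]; ring

theorem QH_nondeg : Nondeg (QH (K := K)) := by
  intro x hx
  have h1 := hx (1, 0)
  have h2 := hx (0, 1)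
  rw [QH_polar] at h1 h2
  ext
  · simpa using h2
  · simpa using h1

theorem QH_ilat : ILat O QH ((o1 O).prod (o1 O)) := by
  have h := ilat_prod (O := O) (Q1_ilat O.one_mem) (Q1_ilat O.one_mem)
  refine ⟨h.fg, h.full, fun x hx => ?_⟩
  rw [QH_apply]
  exact O.mul_mem hx.1 hx.2

theorem QH_max {Q : QuadraticForm K V} {N : Submodule O V} (hN : MaxIn O Q N)  :
    MaxIn O (QH.prod Q) (((o1 O).prod (o1 O)).prod N) := by
  rintro ⟨⟨a, b⟩, v⟩ h1 h2
  have hb := h2 ((1, 0), 0) ⟨⟨O.one_mem, O.zero_mem⟩, N.zero_mem⟩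
  have ha := h2 ((0, 1), 0) ⟨⟨O.zero_mem, O.one_mem⟩, N.zero_mem⟩
  simp only [polar_prod, QH_polar, polar_zero_right, mul_one, mul_zero, add_zero, zero_add] at ha hb
  refine ⟨⟨ha, hb⟩, hN v ?_ fun y hy => ?_⟩
  · simp only [prod_apply, QH_apply] at h1
    have := O.sub_mem h1 (O.mul_mem ha hb)
    rwa [add_sub_cancel_left] at this
  · have := h2 ((0, 0), y) ⟨⟨O.zero_mem, O.zero_mem⟩, hy⟩
    simpa [polar_prod, QH_polar] using this

namespace LD
variable {p : K} (D : LD O p)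
include D

theorem eCard_prod {Q : QuadraticForm K V} {Q' : QuadraticForm K V'} {N : Submodule O V}
    {N' : Submodule O V'} (hxy : ∀ x ∈ N, ∀ y ∈ N', p⁻¹ * (Q x + Q' y) ∈ O →
      (∀ z ∈ N, p⁻¹ * polar Q x z ∈ O) → p⁻¹ * Q x ∈ O) :
    eCard O p (Q.prod Q') (N.prod N') = eCard O p Q N * eCard O p Q' N' := by
  refine eCard_prod_aux ((Sm O p Q N).submoduleOf N).mkQ ((Sm O p Q' N').submoduleOf N').mkQ
    (Submodule.mkQ_surjective _) (Submodule.mkQ_surjective _) fun x y => ?_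
  rw [Submodule.mkQ_apply, Submodule.mkQ_apply, Submodule.Quotient.mk_eq_zero,
    Submodule.Quotient.mk_eq_zero]
  change (x : V) ∈ Sm O p Q N ∧ (y : V') ∈ Sm O p Q' N' ↔ _
  simp only [mem_Sm, prod_apply, polar_prod]
  constructor
  · rintro ⟨⟨-, h1, h2⟩, -, h1', h2'⟩
    refine ⟨⟨x.2, y.2⟩, ?_, ?_⟩
    · rw [mul_add]; exact O.add_mem h1 h1'
    · rintro ⟨z, z'⟩ ⟨hz, hz'⟩
      rw [mul_add]; exact O.add_mem (h2 z hz) (h2' z' hz')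
  · rintro ⟨-, h1, h2⟩
    have hx : ∀ z ∈ N, p⁻¹ * polar Q (x : V) z ∈ O := by
      intro z hz
      have := h2 (z, 0) ⟨hz, N'.zero_mem⟩
      simpa using this
    have hQx := hxy x x.2 y y.2 h1 hx
    refine ⟨⟨x.2, hQx, hx⟩, y.2, ?_, ?_⟩
    · have := O.sub_mem h1 hQx
      rwa [mul_add, add_sub_cancel_left] at this
    · intro z hz
      have := h2 (0, z) ⟨N.zero_mem, hz⟩
      simpa using this

/-- The order of the residue field. -/
def qq : ℕ := Nat.card (O ⧸ Ideal.span {(⟨p, D.p_mem⟩ : O)})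

theorem mk_zero (x : O) :
    (Ideal.Quotient.mk (Ideal.span {(⟨p, D.p_mem⟩ : O)}) x) = 0 ↔ p⁻¹ * x ∈ O := by
  have hp := D.p_ne
  rw [Ideal.Quotient.eq_zero_iff_mem, Ideal.mem_span_singleton']
  constructor
  · rintro ⟨a, rfl⟩
    change p⁻¹ * (a * p) ∈ O
    rw [mul_comm, mul_assoc, mul_inv_cancel₀ hp, mul_one]; exact a.2
  · intro h
    refine ⟨⟨_, h⟩, ?_⟩
    ext
    change p⁻¹ * x * p = x
    field_simp

theorem two_le_qq : 2 ≤ D.qq := by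
  have := D.fin
  have : Nontrivial (O ⧸ Ideal.span {(⟨p, D.p_mem⟩ : O)}) := by
    refine ⟨Ideal.Quotient.mk _ 1, 0, ?_⟩
    rw [Ne, D.mk_zero]
    exact D.one_not
  exact Finite.one_lt_card

theorem sq_div {x : K} (hx : x ∈ O) (h : p⁻¹ * (x * x) ∈ O) : p⁻¹ * x ∈ O := by
  by_contra hn
  have hi := D.inv_mem hx hn
  have hx0 : x ≠ 0 := by rintro rfl; rw [mul_zero] at hn; exact hn O.zero_mem
  apply hn
  have := O.mul_mem h hi
  convert this using 1
  field_simp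

/-- Reduction. -/
def red : o1 O →ₗ[O] O ⧸ Ideal.span {(⟨p, D.p_mem⟩ : O)} where
  toFun x := Ideal.Quotient.mk _ ⟨x, x.2⟩
  map_add' _ _ := rfl
  map_smul' _ _ := rfl

theorem red_surj : Function.Surjective D.red := by
  intro z
  obtain ⟨x, rfl⟩ := Ideal.Quotient.mk_surjective z
  exact ⟨⟨x, x.2⟩, rfl⟩

theorem red_zero (x : o1 O) : D.red x = 0 ↔ p⁻¹ * (x : K) ∈ O := D.mk_zero ⟨x, x.2⟩

theorem eCard_one : eCard O p (Q1 1) (o1 O) = D.qq := by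
  refine eCard_eq_of_surj D.red D.red_surj fun x => ?_
  rw [red_zero, mem_Sm]
  constructor
  · intro h
    refine ⟨x.2, ?_, fun y hy => ?_⟩
    · rw [Q1_apply, one_mul, ← mul_assoc]; exact O.mul_mem h x.2
    · rw [Q1_polar]
      have := O.mul_mem (O.mul_mem (ofNat_mem O 2) h) hy
      convert this using 1; ring
  · rintro ⟨-, h, -⟩
    rw [Q1_apply, one_mul] at h
    exact D.sq_div x.2 h

theorem eCard_p : eCard O p (Q1 p) (o1 O) = 1 := by
  have hp := D.p_ne
  rw [eCard_eq_of_surj (X := PUnit) (0 : o1 O →ₗ[O] PUnit) (fun _ => ⟨0, rfl⟩), Nat.card_unique]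
  intro x
  simp only [mem_Sm, true_iff]
  refine ⟨x.2, ?_, fun y hy => ?_⟩
  · rw [Q1_apply, inv_mul_cancel_left₀ hp]; exact O.mul_mem x.2 x.2
  · rw [Q1_polar]
    have := O.mul_mem (O.mul_mem (ofNat_mem O 2) x.2) hy
    convert this using 1; field_simp

theorem eCard_H : eCard O p QH ((o1 O).prod (o1 O)) = D.qq * D.qq := by
  refine eCard_prod_aux D.red D.red D.red_surj D.red_surj fun x y => ?_
  rw [red_zero, red_zero, mem_Sm]
  constructor
  · rintro ⟨h1, h2⟩
    refine ⟨⟨x.2, y.2⟩, ?_, ?_⟩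
    · rw [QH_apply, ← mul_assoc]; exact O.mul_mem h1 y.2
    · rintro ⟨z, z'⟩ ⟨hz, hz'⟩
      rw [QH_polar, mul_add, ← mul_assoc, ← mul_assoc]
      exact O.add_mem (O.mul_mem h1 hz') (O.mul_mem h2 hz)
  · rintro ⟨-, -, h⟩
    have h1 := h (0, 1) ⟨O.zero_mem, O.one_mem⟩
    have h2 := h (1, 0) ⟨O.one_mem, O.zero_mem⟩
    rw [QH_polar] at h1 h2
    exact ⟨by simpa using h1, by simpa using h2⟩
end LD
end
end QW

namespace QW
open QuadraticMap

/-- Ternary quadratic forms over finite fields are isotropic. -/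
theorem ternary_zero (k : Type) [Field k] [Finite k] (a b c d e f : k) :
    ∃ x y z : k, ¬ (x = 0 ∧ y = 0 ∧ z = 0) ∧
      a * (x * x) + b * (y * y) + c * (z * z) + d * (x * y) + e * (y * z) + f * (x * z) = 0 := by
  classical
  have := Fintype.ofFinite k
  obtain ⟨p, hp⟩ := CharP.exists k
  have hpp : p.Prime := (CharP.char_is_prime_or_zero k p).resolve_right (CharP.char_ne_zero_of_finite k p)
  let F : MvPolynomial (Fin 3) k := MvPolynomial.C a * (MvPolynomial.X 0 * MvPolynomial.X 0) +
    MvPolynomial.C b * (MvPolynomial.X 1 * MvPolynomial.X 1) +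
    MvPolynomial.C c * (MvPolynomial.X 2 * MvPolynomial.X 2) +
    MvPolynomial.C d * (MvPolynomial.X 0 * MvPolynomial.X 1) +
    MvPolynomial.C e * (MvPolynomial.X 1 * MvPolynomial.X 2) +
    MvPolynomial.C f * (MvPolynomial.X 0 * MvPolynomial.X 2)
  have hmon : ∀ (t : k) (i j : Fin 3), (MvPolynomial.C t * (MvPolynomial.X i * MvPolynomial.X j) :
      MvPolynomial (Fin 3) k).totalDegree ≤ 2 := by
    intro t i j
    refine (MvPolynomial.totalDegree_mul _ _).trans ?_
    rw [MvPolynomial.totalDegree_C, zero_add]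
    refine (MvPolynomial.totalDegree_mul _ _).trans ?_
    simp
  have hadd : ∀ A B : MvPolynomial (Fin 3) k, A.totalDegree ≤ 2 → B.totalDegree ≤ 2 →
      (A + B).totalDegree ≤ 2 := fun A B hA hB =>
    (MvPolynomial.totalDegree_add A B).trans (max_le hA hB)
  have hF : F.totalDegree < Fintype.card (Fin 3) := by
    refine lt_of_le_of_lt (b := 2) ?_ (by simp)
    exact hadd _ _ (hadd _ _ (hadd _ _ (hadd _ _ (hadd _ _ (hmon _ _ _) (hmon _ _ _))
      (hmon _ _ _)) (hmon _ _ _)) (hmon _ _ _)) (hmon _ _ _)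
  have hdvd := char_dvd_card_solutions p hF
  by_contra! hcon
  have hsub : Fintype.card { x : Fin 3 → k // MvPolynomial.eval x F = 0 } = 1 := by
    rw [Fintype.card_eq_one_iff]
    refine ⟨⟨0, by simp [F]⟩, ?_⟩
    rintro ⟨x, hx⟩
    ext i
    by_contra hne
    refine hcon (x 0) (x 1) (x 2) ?_ ?_
    · intro h0 h1 h2
      apply hne
      fin_cases i <;> assumption
    · simpa [F] using hx
  rw [hsub] at hdvd
  exact hpp.one_lt.ne' (Nat.dvd_one.1 hdvd)

section
variable {K : Type} [Field K] {O : Subring K} {p : K} (D : LD O p)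
variable {V : Type} [AddCommGroup V] [Module K V]
include D

namespace LD

theorem isFrac : IsFractionRing O K := by
  refine IsFractionRing.of_field O K fun z => ?_
  obtain ⟨k, hk⟩ := D.pow_mem_of (x := z)
  refine ⟨⟨_, hk⟩, ⟨p ^ k, O.pow_mem D.p_mem k⟩, ?_⟩
  change z = (p ^ k * z) / p ^ k
  rw [mul_div_cancel_left₀ _ (pow_ne_zero _ D.p_ne)]

theorem exists_basis [FiniteDimensional K V] {B : Submodule O V} (hfg : B.FG)
    (hfull : Submodule.span K (B : Set V) = ⊤) :
    ∃ e : Module.Basis (Fin (Module.finrank K V)) K V, ∀ x, x ∈ B ↔ ∀ i, e.repr x i ∈ O := by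
  have := D.isFrac
  have := D.pid
  have : Submodule.IsLattice K B := ⟨hfg, hfull⟩
  have : Module.Free O B := Submodule.IsLattice.free K B
  have hr : Module.finrank O B = Module.finrank K V := by
    have := Submodule.IsLattice.rank' K B
    rw [Module.finrank, this, Module.finrank]
  let e := Module.finBasisOfFinrankEq O B hr
  refine ⟨e.extendOfIsLattice K, fun x => ?_⟩
  constructor
  · intro hx i
    have h1 : x = ∑ i, ((e.repr ⟨x, hx⟩ i : O) : K) • e.extendOfIsLattice K i := by
      have := congrArg (fun z : B => (z : V)) (e.sum_repr ⟨x, hx⟩)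
      simp only [Submodule.coe_sum, Submodule.coe_smul] at this
      refine this.symm.trans ?_
      refine Finset.sum_congr rfl fun i _ => ?_
      rw [Module.Basis.extendOfIsLattice_apply]
      rfl
    have h2 : (e.extendOfIsLattice K).repr x i = ((e.repr ⟨x, hx⟩ i : O) : K) := by
      have h3 := congrArg (fun w => (e.extendOfIsLattice K).repr w i) h1
      simp only [Module.Basis.repr_sum_self] at h3
      exact h3
    rw [h2]
    exact (e.repr ⟨x, hx⟩ i).2
  · intro h
    rw [← (e.extendOfIsLattice K).sum_repr x]
    refine B.sum_mem fun i _ => ?_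
    rw [Module.Basis.extendOfIsLattice_apply]
    exact B.smul_mem (⟨_, h i⟩ : O) (e i).2

theorem prim_functional [FiniteDimensional K V] {B : Submodule O V} (hfg : B.FG)
    (hfull : Submodule.span K (B : Set V) = ⊤) {b : V} (hb : b ∈ B) (hpb : p⁻¹ • b ∉ B) :
    ∃ f : V →ₗ[K] K, f b = 1 ∧ ∀ x ∈ B, f x ∈ O := by
  obtain ⟨e, he⟩ := D.exists_basis hfg hfull
  rw [he] at hpb
  push Not at hpb
  obtain ⟨i, hi⟩ := hpb
  rw [map_smul, Finsupp.smul_apply, smul_eq_mul] at hi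
  have hbi := (he b).1 hb i
  have h0 : e.repr b i ≠ 0 := by
    intro h; rw [h, mul_zero] at hi; exact hi O.zero_mem
  refine ⟨(e.repr b i)⁻¹ • e.coord i, ?_, fun x hx => ?_⟩
  · simp [h0]
  · simp only [LinearMap.smul_apply, Module.Basis.coord_apply, smul_eq_mul]
    exact O.mul_mem (D.inv_mem hbi hi) ((he x).1 hx i)

theorem cw [FiniteDimensional K V] {Q : QuadraticForm K V} {A : Submodule O V} (h : ILat O Q A)
    (hd : 3 ≤ Module.finrank K V) : ∃ u ∈ A, p⁻¹ • u ∉ A ∧ p⁻¹ * Q u ∈ O := by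
  obtain ⟨e, he⟩ := D.exists_basis h.fg h.full
  let I : Ideal O := Ideal.span {(⟨p, D.p_mem⟩ : O)}
  have hmax : I.IsMaximal := by
    rw [Ideal.isMaximal_iff]
    constructor
    · intro h1
      have := (D.mk_zero 1).1 (Ideal.Quotient.eq_zero_iff_mem.2 h1)
      exact D.one_not this
    · intro J x hIJ hxI hxJ
      have hx : ¬ p⁻¹ * (x : K) ∈ O := by
        intro h1
        exact hxI (Ideal.Quotient.eq_zero_iff_mem.1 ((D.mk_zero x).2 h1))
      have hi := D.inv_mem x.2 hx
      have h0 : (x : K) ≠ 0 := by intro h; rw [h, mul_zero] at hx; exact hx O.zero_mem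
      have := J.mul_mem_left (⟨_, hi⟩ : O) hxJ
      convert this using 1
      ext
      simp [h0]
  let _ : Field (O ⧸ I) := Ideal.Quotient.field I
  have : Finite (O ⧸ I) := D.fin
  have heA : ∀ i, e i ∈ A := by
    intro i
    rw [he]
    intro j
    rw [Module.Basis.repr_self, Finsupp.single_apply]
    split_ifs
    · exact O.one_mem
    · exact O.zero_mem
  let i0 : Fin (Module.finrank K V) := ⟨0, by omega⟩
  let i1 : Fin (Module.finrank K V) := ⟨1, by omega⟩
  let i2 : Fin (Module.finrank K V) := ⟨2, by omega⟩
  have n01 : i0 ≠ i1 := by simp [i0, i1]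
  have n02 : i0 ≠ i2 := by simp [i0, i2]
  have n12 : i1 ≠ i2 := by simp [i1, i2]
  let qo : Fin (Module.finrank K V) → O := fun i => ⟨Q (e i), h.int _ (heA i)⟩
  let po : Fin (Module.finrank K V) → Fin (Module.finrank K V) → O :=
    fun i j => ⟨polar Q (e i) (e j), polar_mem h.int (heA i) (heA j)⟩
  let π := Ideal.Quotient.mk I
  obtain ⟨x, y, z, hne, hz⟩ := ternary_zero (O ⧸ I) (π (qo i0)) (π (qo i1)) (π (qo i2))
    (π (po i0 i1)) (π (po i1 i2)) (π (po i0 i2))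
  obtain ⟨x, rfl⟩ := Ideal.Quotient.mk_surjective x
  obtain ⟨y, rfl⟩ := Ideal.Quotient.mk_surjective y
  obtain ⟨z, rfl⟩ := Ideal.Quotient.mk_surjective z
  simp only [π, ← map_mul, ← map_add] at hz
  rw [D.mk_zero] at hz
  rw [D.mk_zero, D.mk_zero, D.mk_zero] at hne
  let u : V := (x : K) • e i0 + (y : K) • e i1 + (z : K) • e i2
  have hu : u ∈ A := A.add_mem (A.add_mem (A.smul_mem x (heA _)) (A.smul_mem y (heA _)))
    (A.smul_mem z (heA _))
  refine ⟨u, hu, ?_, ?_⟩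
  · intro hcon
    apply hne
    rw [he] at hcon
    have h0 := hcon i0
    have h1 := hcon i1
    have h2 := hcon i2
    simp only [u, map_smul, map_add, Module.Basis.repr_self, Finsupp.smul_apply, Finsupp.add_apply,
      Finsupp.single_apply, n01, n02, n12, n01.symm, n02.symm, n12.symm, smul_eq_mul, if_true,
      if_false, mul_zero, mul_one, add_zero, zero_add] at h0 h1 h2
    exact ⟨h0, h1, h2⟩
  · convert hz using 2
    simp only [u, QuadraticMap.map_add Q, QuadraticMap.map_smul, polar_smul_left, polar_smul_right,
      polar_add_left, smul_eq_mul, qo, po, Subring.coe_add, Subring.coe_mul]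
    ring

end LD
end
end QW

namespace QW
open QuadraticMap

section
variable {K : Type} [Field K] {O : Subring K} {p : K} (D : LD O p)
variable {V : Type} [AddCommGroup V] [Module K V]

/-- The space represents two hyperplanes with different invariants. -/
def DD (O : Subring K) (p : K) (Q : QuadraticForm K V) (n : ℕ) : Prop :=
  ∃ c c', c ≠ c' ∧ Hyp O p Q n c ∧ Hyp O p Q n c'

namespace LD
include D

theorem eCard_pos {Q : QuadraticForm K V} {N : Submodule O V} (h : ILat O Q N) :
    0 < eCard O p Q N := by
  have := D.fin
  have hp := D.p_ne
  let I : Ideal O := Ideal.span {(⟨p, D.p_mem⟩ : O)}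
  let X := N ⧸ (Sm O p Q N).submoduleOf N
  have hfinN : Module.Finite O N := Module.Finite.iff_fg.2 h.fg
  have hX : Module.Finite O X := inferInstance
  have htor : Module.IsTorsionBySet O X (I : Set O) := by
    intro z a
    obtain ⟨w, rfl⟩ := Submodule.mkQ_surjective _ z
    obtain ⟨a, ha⟩ := a
    obtain ⟨b, rfl⟩ := Ideal.mem_span_singleton'.1 ha
    change (b * ⟨p, D.p_mem⟩ : O) • ((Sm O p Q N).submoduleOf N).mkQ w = 0
    rw [← map_smul]
    refine (Submodule.Quotient.mk_eq_zero _).2 ?_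
    rw [mul_smul]
    refine Submodule.smul_mem _ _ ?_
    change p • (w : V) ∈ Sm O p Q N
    refine ⟨D.psmul_mem w.2, ?_, fun y hy => ?_⟩
    · rw [QuadraticMap.map_smul, smul_eq_mul, mul_assoc, inv_mul_cancel_left₀ hp]
      exact O.mul_mem D.p_mem (h.int _ w.2)
    · rw [polar_smul_left, smul_eq_mul, inv_mul_cancel_left₀ hp]
      exact polar_mem h.int w.2 hy
  let _ : Module (O ⧸ I) X := htor.module
  have : IsScalarTower O (O ⧸ I) X := htor.isScalarTower
  have : Module.Finite (O ⧸ I) X := Module.Finite.of_restrictScalars_finite O (O ⧸ I) X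
  have : Finite (O ⧸ I) := D.fin
  have : Finite X := Module.finite_of_finite (O ⧸ I)
  exact Nat.card_pos

/-- Restriction of an anisotropic form. -/
theorem an_restrict {Q : QuadraticForm K V} (hQ : ∀ x, Q x = 0 → x = 0) (U : Submodule K V) :
    ∀ x, QU Q U x = 0 → x = 0 := by
  intro x hx
  ext
  exact hQ _ hx

theorem hyp_ker [FiniteDimensional K V] {Q : QuadraticForm K V} (hQ : ∀ x, Q x = 0 → x = 0) {n : ℕ}
    (hn : Module.finrank K V = n + 1) {f : V →ₗ[K] K} {b : V} (hb : f b = 1) :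
    Hyp O p Q n (eCard O p (QU Q (LinearMap.ker f)) (D.AA (D.an_restrict hQ (LinearMap.ker f)))) := by
  refine ⟨LinearMap.ker f, inferInstance, inferInstance, QU Q _, _, D.an_nondeg (D.an_restrict hQ _),
    ?_, D.AA_ilat _, D.AA_max _, ⟨(LinearMap.ker f).subtype, fun x => rfl⟩, rfl⟩
  have hf : f ≠ 0 := by rintro rfl; simp at hb
  have h1 := LinearMap.finrank_range_add_finrank_ker f
  have h2 : LinearMap.range f = ⊤ := LinearMap.range_eq_top.2 (LinearMap.surjective hf)
  rw [h2, finrank_top, Module.finrank_self] at h1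
  omega

theorem hyp_i {Q : QuadraticForm K V} (hQ : ∀ x, Q x = 0 → x = 0)
    {f : V →ₗ[K] K} {b : V} (hb : f b = 1) (hbO : p⁻¹ * Q b ∈ O) (hfO : ∀ x, Q x ∈ O → f x ∈ O) :
    eCard O p (QU Q (LinearMap.ker f)) (D.AA (D.an_restrict hQ (LinearMap.ker f))) =
      eCard O p Q (D.AA hQ) := by
  let φ : D.AA (D.an_restrict hQ (LinearMap.ker f)) →ₗ[O]
      (D.AA hQ) ⧸ (Sm O p Q (D.AA hQ)).submoduleOf (D.AA hQ) :=
    Submodule.mkQ _ ∘ₗ (LinearMap.codRestrict (D.AA hQ) (((LinearMap.ker f).subtype.restrictScalars O)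
      ∘ₗ Submodule.subtype _) fun w => w.2)
  refine eCard_eq_of_surj φ ?_ ?_
  · intro z
    obtain ⟨⟨a, ha⟩, rfl⟩ := Submodule.mkQ_surjective _ z
    have hfb : f a • b ∈ Sm O p Q (D.AA hQ) :=
      Submodule.smul_mem _ (⟨_, hfO a ha⟩ : O) ((D.mem_Sm_AA hQ).2 hbO)
    have hmem : a - f a • b ∈ D.AA hQ := Submodule.sub_mem _ ha hfb.1
    refine ⟨⟨⟨a - f a • b, ?_⟩, hmem⟩, ?_⟩
    · rw [LinearMap.mem_ker, map_sub, map_smul, hb, smul_eq_mul, mul_one, sub_self]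
    · refine (Submodule.Quotient.eq _).2 ?_
      change (a - f a • b) - a ∈ Sm O p Q (D.AA hQ)
      rw [sub_sub_cancel_left]
      exact Submodule.neg_mem _ hfb
  · intro w
    rw [mem_Sm_AA]
    have : φ w = 0 ↔ ((w : LinearMap.ker f) : V) ∈ Sm O p Q (D.AA hQ) :=
      (Submodule.Quotient.mk_eq_zero _).trans Iff.rfl
    rw [this, mem_Sm_AA]
    rfl

theorem hyp_ii {Q : QuadraticForm K V} (hQ : ∀ x, Q x = 0 → x = 0)
    {f : V →ₗ[K] K} {b : V} (hb : f b = 1) (hbO : Q b ∈ O) (hfO : ∀ x, Q x ∈ O → f x ∈ O)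
    (hfp : ∀ x, p⁻¹ * Q x ∈ O → p⁻¹ * f x ∈ O) :
    eCard O p Q (D.AA hQ) =
    eCard O p (QU Q (LinearMap.ker f)) (D.AA (D.an_restrict hQ (LinearMap.ker f))) * D.qq := by
  have hp := D.p_ne
  let A' := D.AA (D.an_restrict hQ (LinearMap.ker f))
  let pr : V →ₗ[K] LinearMap.ker f := LinearMap.codRestrict _ (LinearMap.id - f.smulRight b) (by
    intro a
    simp [hb])
  have hpr : ∀ a, (pr a : V) = a - f a • b := fun a => rfl
  let g1 : D.AA hQ →ₗ[O] A' := LinearMap.codRestrict A' ((pr.restrictScalars O) ∘ₗ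
    Submodule.subtype _) (by
      rintro ⟨a, ha⟩
      change Q (pr a : V) ∈ O
      rw [hpr]
      exact (D.AA hQ).sub_mem ha ((D.AA hQ).smul_mem (⟨_, hfO a ha⟩ : O) hbO))
  let g2 : D.AA hQ →ₗ[O] o1 O := LinearMap.codRestrict (o1 O) ((f.restrictScalars O) ∘ₗ
    Submodule.subtype _) (fun a => hfO a a.2)
  rw [qq, eCard.eq_1 O p (QU Q (LinearMap.ker f)), ← Nat.card_prod]
  refine eCard_eq_of_surj ((Submodule.mkQ _ ∘ₗ g1).prod (D.red ∘ₗ g2)) ?_ ?_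
  · rintro ⟨z, t⟩
    obtain ⟨⟨a, ha⟩, rfl⟩ := Submodule.mkQ_surjective _ z
    obtain ⟨t, rfl⟩ := D.red_surj t
    have hmem : (a : V) + (t : K) • b ∈ D.AA hQ :=
      (D.AA hQ).add_mem ha ((D.AA hQ).smul_mem (⟨_, t.2⟩ : O) hbO)
    have hfa : f (a : V) = 0 := a.2
    refine ⟨⟨_, hmem⟩, Prod.ext ?_ ?_⟩
    · change Submodule.mkQ _ (g1 _) = _
      congr 1
      ext
      change (a : V) + (t : K) • b - f ((a : V) + (t : K) • b) • b = a
      rw [map_add, map_smul, hfa, hb]; simp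
    · change D.red (g2 _) = _
      congr 1
      ext
      change f ((a : V) + (t : K) • b) = t
      rw [map_add, map_smul, hfa, hb]; simp
  · intro a
    have h1 : ((Submodule.mkQ ((Sm O p (QU Q (LinearMap.ker f)) A').submoduleOf A') ∘ₗ g1).prod
        (D.red ∘ₗ g2)) a = 0 ↔ ((pr a : LinearMap.ker f) ∈ Sm O p (QU Q (LinearMap.ker f)) A' ∧
          p⁻¹ * f a ∈ O) := by
      rw [LinearMap.prod_apply]
      refine Prod.mk_eq_zero.trans (and_congr ?_ ?_)
      · exact (Submodule.Quotient.mk_eq_zero _).trans Iff.rfl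
      · exact D.red_zero _
    rw [h1, mem_Sm_AA, mem_Sm_AA]
    have h2 : p⁻¹ * QU Q (LinearMap.ker f) (pr a) ∈ O ↔ (pr a : V) ∈ Sm O p Q (D.AA hQ) := by
      rw [mem_Sm_AA]; rfl
    have hfb : p⁻¹ * f a ∈ O → f (a : V) • b ∈ Sm O p Q (D.AA hQ) := by
      intro h
      rw [mem_Sm_AA, QuadraticMap.map_smul, smul_eq_mul]
      have := O.mul_mem (O.mul_mem h (hfO _ a.2)) hbO
      convert this using 1
      ring
    rw [h2, hpr, ← D.mem_Sm_AA hQ]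
    constructor
    · rintro ⟨h3, h4⟩
      have := Submodule.add_mem _ h3 (hfb h4)
      rwa [sub_add_cancel] at this
    · intro h3
      have h4 := hfp _ ((D.mem_Sm_AA hQ).1 h3)
      exact ⟨Submodule.sub_mem _ h3 (hfb h4), h4⟩

theorem qdiv (Q : QuadraticForm K V) (x : V) : Q (p⁻¹ • x) = p⁻¹ * (p⁻¹ * Q x) := by
  rw [QuadraticMap.map_smul, smul_eq_mul, mul_assoc]

theorem dd_aniso [FiniteDimensional K V] {Q : QuadraticForm K V} (hQ : ∀ x, Q x = 0 → x = 0) {n : ℕ}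
    (hn : Module.finrank K V = n + 1) (h1 : ∃ x, Q x ∈ O ∧ p⁻¹ * Q x ∉ O)
    (h2 : ∃ x, p⁻¹ * Q x ∈ O ∧ p⁻¹ * (p⁻¹ * Q x) ∉ O) : DD O p Q n := by
  have hp := D.p_ne
  have hA := D.AA_ilat hQ
  obtain ⟨x, hx, hx'⟩ := h1
  obtain ⟨y, hy, hy'⟩ := h2
  obtain ⟨f, hf, hf'⟩ := D.prim_functional hA.fg hA.full (b := y) (D.mem_of_p hy) (by
    rw [mem_AA, D.qdiv]; exact hy')
  -- the lattice `p⁻¹ • Sm A`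
  let B : Submodule O V := (Sm O p Q (D.AA hQ)).comap
    ((LinearMap.lsmul K V p).restrictScalars O)
  have hB : ∀ z, z ∈ B ↔ p⁻¹ * Q (p • z) ∈ O := fun z => D.mem_Sm_AA hQ
  have hAB : D.AA hQ ≤ B := by
    intro z hz
    rw [hB, QuadraticMap.map_smul, smul_eq_mul, mul_assoc, inv_mul_cancel_left₀ hp]
    exact O.mul_mem D.p_mem hz
  have hBfull : Submodule.span K (B : Set V) = ⊤ := by
    rw [eq_top_iff, ← hA.full]; exact Submodule.span_mono hAB
  have hBfg : B.FG := by
    have hle : B ≤ (D.AA hQ).map ((LinearMap.lsmul K V p⁻¹).restrictScalars O) := by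
      intro z hz
      refine ⟨p • z, D.mem_of_p ((hB z).1 hz), ?_⟩
      change p⁻¹ • p • z = z
      rw [smul_smul, inv_mul_cancel₀ hp, one_smul]
    have hfg := hA.fg.map ((LinearMap.lsmul K V p⁻¹).restrictScalars O)
    have := D.pid
    have hno : IsNoetherian O ((D.AA hQ).map ((LinearMap.lsmul K V p⁻¹).restrictScalars O)) :=
      isNoetherian_of_fg_of_noetherian _ hfg
    exact (isNoetherian_submodule.1 hno) _ hle
  obtain ⟨g, hg, hg'⟩ := D.prim_functional hBfg hBfull (b := x) (hAB hx) (by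
    rw [hB, smul_smul, mul_inv_cancel₀ hp, one_smul]; exact hx')
  refine ⟨_, _, ?_, D.hyp_ker hQ hn hf, D.hyp_ker hQ hn hg⟩
  rw [D.hyp_i hQ hf hy hf', D.hyp_ii hQ hg hx (fun z hz => hg' z (hAB hz)) ?_]
  · have h3 := D.eCard_pos (D.AA_ilat (D.an_restrict hQ (LinearMap.ker g)))
    have h4 := D.two_le_qq
    nlinarith
  · intro z hz
    have := hg' (p⁻¹ • z) (by rw [hB, smul_smul, mul_inv_cancel₀ hp, one_smul]; exact hz)
    rwa [map_smul, smul_eq_mul] at this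

theorem hyp_H [FiniteDimensional K V] {Q : QuadraticForm K V} {x y : V} (h : HP Q x y) {m c : ℕ}
    (hc : Hyp O p (QU Q (UU Q x y)) m c) : Hyp O p Q (m + 2) (D.qq * D.qq * c) := by
  obtain ⟨W, _, _, Q', N, hQ', hW, hN, hNm, ⟨σ, hσ⟩, rfl⟩ := hc
  have : Module.Finite K W := Module.Finite.of_injective σ (isom_inj hQ' hσ)
  refine ⟨(K × K) × W, inferInstance, inferInstance, QH.prod Q', ((o1 O).prod (o1 O)).prod N,
    nondeg_prod QH_nondeg hQ', ?_, ilat_prod QH_ilat hN, QH_max hNm,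
    ⟨h.equiv.toLinearMap ∘ₗ (LinearMap.id.prodMap σ), ?_⟩, ?_⟩
  · rw [Module.finrank_prod, Module.finrank_prod, Module.finrank_self, hW]; ring
  · rintro ⟨⟨a, b⟩, w⟩
    refine (h.Q_f a b (σ w)).trans ?_
    rw [prod_apply, QH_apply, ← hσ]
    rfl
  · rw [D.eCard_prod, D.eCard_H]
    rintro ⟨a, b⟩ ⟨ha, hb⟩ w hw - h2
    have := h2 (0, 1) ⟨O.zero_mem, O.one_mem⟩
    rw [QH_polar] at this
    simp only [mul_one, mul_zero, add_zero] at this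
    rw [QH_apply, ← mul_assoc]
    exact O.mul_mem this hb

theorem hyp_1 [FiniteDimensional K V] {Q : QuadraticForm K V} {x y : V} (h : HP Q x y) {m : ℕ}
    (hm : Module.finrank K (UU Q x y) = m)
    (hQ : ∀ u, QU Q (UU Q x y) u = 0 → u = 0) {c : K} (hc : c ∈ O) (hc0 : c ≠ 0)
    (hmax : ∀ (t : K) (u : UU Q x y), c * (t * t) + Q (u : V) ∈ O → t ∈ O)
    (hx : ∀ t ∈ O, ∀ u : UU Q x y, Q (u : V) ∈ O → p⁻¹ * (c * (t * t) + Q (u : V)) ∈ O →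
      p⁻¹ * (c * (t * t)) ∈ O) :
    Hyp O p Q (m + 1) (eCard O p (Q1 c) (o1 O) * eCard O p (QU Q (UU Q x y)) (D.AA hQ)) := by
  refine ⟨K × UU Q x y, inferInstance, inferInstance, (Q1 c).prod (QU Q _), (o1 O).prod (D.AA hQ),
    nondeg_prod (Q1_nondeg hc0 D.two) (D.an_nondeg hQ), ?_, ilat_prod (Q1_ilat hc) (D.AA_ilat hQ),
    ?_, ⟨(LinearMap.id.smulRight (x + c • y)).coprod (Submodule.subtype _), ?_⟩, ?_⟩
  · rw [Module.finrank_prod, Module.finrank_self, hm]; ring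
  · rintro ⟨t, u⟩ h1 -
    rw [prod_apply, Q1_apply] at h1
    have ht := hmax t u h1
    refine ⟨ht, ?_⟩
    have := O.sub_mem h1 (O.mul_mem hc (O.mul_mem ht ht))
    rwa [add_sub_cancel_left] at this
  · rintro ⟨t, u⟩
    rw [prod_apply, Q1_apply, LinearMap.coprod_apply]
    have := h.Q_f t (t * c) u
    have e : ((LinearMap.id : K →ₗ[K] K).smulRight (x + c • y)) t + (UU Q x y).subtype u =
      t • x + (t * c) • y + (u : V) := by simp [smul_add, smul_smul]
    rw [e, this, QuadraticMap.comp_apply]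
    simp only [Submodule.subtype_apply]
    ring
  · rw [D.eCard_prod]
    intro t ht u hu h1 _
    rw [Q1_apply] at h1 ⊢
    exact hx t ht u hu h1

theorem dd_main : ∀ (n : ℕ) (V : Type) [AddCommGroup V] [Module K V] [FiniteDimensional K V]
    (Q : QuadraticForm K V), Nondeg Q → Module.finrank K V = n + 1 →
    ((∀ x, Q x = 0 → x = 0) → (∃ x, Q x ∈ O ∧ p⁻¹ * Q x ∉ O) ∧
      ∃ x, p⁻¹ * Q x ∈ O ∧ p⁻¹ * (p⁻¹ * Q x) ∉ O) → DD O p Q n := by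
  intro n
  induction n using Nat.strong_induction_on with
  | _ n ih =>
  intro V _ _ _ Q hQ hn hgood
  have hp := D.p_ne
  by_cases han : ∀ x, Q x = 0 → x = 0
  · exact D.dd_aniso han hn (hgood han).1 (hgood han).2
  push Not at han
  obtain ⟨x, hx, hx0⟩ := han
  obtain ⟨y, h⟩ : ∃ y, HP Q x y := by
    have : ∃ y, polar Q x y ≠ 0 := by
      by_contra! hcon
      exact hx0 (hQ x hcon)
    obtain ⟨y0, hy0⟩ := this
    obtain ⟨y1, hxy1⟩ : ∃ y1, polar Q x y1 = 1 :=
      ⟨(polar Q x y0)⁻¹ • y0, by rw [polar_smul_right, smul_eq_mul, inv_mul_cancel₀ hy0]⟩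
    have hxx : polar Q x x = 0 := by rw [polar_self2, hx, mul_zero]
    refine ⟨y1 - Q y1 • x, hx, ?_, ?_⟩
    · rw [sub_eq_add_neg, QuadraticMap.map_add Q, QuadraticMap.map_neg, QuadraticMap.map_smul,
        polar_neg_right, polar_smul_right, polar_comm Q y1 x, hx, hxy1]
      simp
    · rw [polar_sub_right, polar_smul_right, hxx, hxy1]; simp
  have hU := h.finrank_UU
  have hUn := h.nondeg hQ
  have hq := D.two_le_qq
  rcases Nat.eq_zero_or_pos (Module.finrank K (UU Q x y)) with h0 | hpos
  · -- hyperbolic plane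
    have hanU : ∀ u, QU Q (UU Q x y) u = 0 → u = 0 := by
      intro u _
      have := Module.finrank_zero_iff.1 h0
      exact Subsingleton.elim _ _
    have hu0 : ∀ u : UU Q x y, Q (u : V) = 0 := by
      intro u
      have := Module.finrank_zero_iff.1 h0
      rw [Subsingleton.elim u 0]; simp
    have hn1 : n = 0 + 1 := by omega
    have hsq : ∀ t : K, p * (t * t) ∈ O → t ∈ O := by
      intro t ht
      by_contra hn
      have ht0 : t ≠ 0 := by rintro rfl; exact hn O.zero_mem
      have hi := (D.mem_or ht0).resolve_left hn
      apply D.p_inv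
      have := O.mul_mem ht (O.mul_mem hi hi)
      convert this using 1
      field_simp
    have H1 := D.hyp_1 h h0 hanU (c := 1) O.one_mem one_ne_zero
      (by intro t u ht
          rw [hu0, one_mul, add_zero] at ht
          exact hsq t (O.mul_mem D.p_mem ht))
      (by intro t ht u hu h1; rwa [hu0, add_zero] at h1)
    have H2 := D.hyp_1 h h0 hanU (c := p) D.p_mem hp
      (by intro t u ht
          rw [hu0, add_zero] at ht
          exact hsq t ht)
      (by intro t ht u hu h1; rwa [hu0, add_zero] at h1)
    rw [← hn1] at H1 H2
    refine ⟨_, _, ?_, H1, H2⟩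
    rw [D.eCard_one, D.eCard_p]
    have h3 := D.eCard_pos (D.AA_ilat hanU)
    nlinarith
  obtain ⟨m, hm⟩ : ∃ m, Module.finrank K (UU Q x y) = m + 1 := ⟨_, (Nat.succ_pred_eq_of_pos hpos).symm⟩
  have hnm : n = m + 2 := by omega
  by_cases hgU : (∀ u, QU Q (UU Q x y) u = 0 → u = 0) →
      (∃ u, QU Q (UU Q x y) u ∈ O ∧ p⁻¹ * QU Q (UU Q x y) u ∉ O) ∧
      ∃ u, p⁻¹ * QU Q (UU Q x y) u ∈ O ∧ p⁻¹ * (p⁻¹ * QU Q (UU Q x y) u) ∉ O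
  · obtain ⟨c, c', hcc, hc, hc'⟩ := ih m (by omega) (UU Q x y) (QU Q _) hUn hm hgU
    rw [hnm]
    refine ⟨_, _, ?_, D.hyp_H h hc, D.hyp_H h hc'⟩
    intro e
    exact hcc (Nat.eq_of_mul_eq_mul_left (by positivity) e)
  · rw [Classical.not_imp] at hgU
    obtain ⟨hanU, hgU⟩ := hgU
    have hA := D.AA_ilat hanU
    -- a primitive vector
    obtain ⟨u0, hu0⟩ : ∃ u : UU Q x y, u ≠ 0 := by
      have : Nontrivial (UU Q x y) := Module.nontrivial_of_finrank_pos (R := K) hpos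
      exact exists_ne 0
    obtain ⟨a, -, hb, hpb⟩ := D.exists_prim hA.fg hA.full hu0
    obtain ⟨f, hf, hf'⟩ := D.prim_functional hA.fg hA.full hb hpb
    have H2 := D.hyp_H h (D.hyp_ker hanU hm hf)
    rw [← hnm] at H2
    have h3 := D.eCard_pos (D.AA_ilat (D.an_restrict hanU (LinearMap.ker f)))
    by_cases hc1 : ∃ u, QU Q (UU Q x y) u ∈ O ∧ p⁻¹ * QU Q (UU Q x y) u ∉ O
    · have hc2 : ∀ u : UU Q x y, p⁻¹ * QU Q (UU Q x y) u ∈ O →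
          p⁻¹ * (p⁻¹ * QU Q (UU Q x y) u) ∈ O := by
        by_contra! hcon
        exact hgU ⟨hc1, hcon⟩
      have H1 := D.hyp_1 h hm hanU (c := p) D.p_mem hp
        (by
          intro t u ht
          by_contra hn
          have ht0 : t ≠ 0 := by rintro rfl; exact hn O.zero_mem
          have hi := (D.mem_or ht0).resolve_left hn
          have e1 : QU Q (UU Q x y) (t⁻¹ • u) = t⁻¹ * t⁻¹ * Q (u : V) := by
            rw [QuadraticMap.map_smul, smul_eq_mul]; rfl
          have e2 : p⁻¹ * (p⁻¹ * (p + t⁻¹ * t⁻¹ * Q (u : V))) ∈ O := by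
            have := O.mul_mem ht (O.mul_mem hi hi)
            convert this using 1
            field_simp
          have e3 : p⁻¹ * QU Q (UU Q x y) (t⁻¹ • u) ∈ O := by
            have := O.sub_mem (D.mem_of_p e2) O.one_mem
            rw [e1]
            convert this using 1
            field_simp
            ring
          have e4 := hc2 _ e3
          apply D.p_inv
          have := O.sub_mem e2 e4
          rw [e1] at this
          convert this using 1
          field_simp
          ring)
        (by
          intro t ht u hu _
          rw [inv_mul_cancel_left₀ hp]; exact O.mul_mem ht ht)
      rw [show m + 1 + 1 = n by omega] at H1
      refine ⟨_, _, ?_, H1, H2⟩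
      rw [D.eCard_p, D.hyp_ii hanU hf hb hf' ?_]
      · intro e
        have h5 : 0 < D.qq * eCard O p (QU (QU Q (UU Q x y)) (LinearMap.ker f))
          (D.AA (D.an_restrict hanU (LinearMap.ker f))) := by positivity
        nlinarith
      · intro u hu
        have := hf' (p⁻¹ • u) (by rw [mem_AA, D.qdiv]; exact hc2 u hu)
        rwa [map_smul, smul_eq_mul] at this
    · push Not at hc1
      have H1 := D.hyp_1 h hm hanU (c := 1) O.one_mem one_ne_zero
        (by
          intro t u ht
          by_contra hn
          have ht0 : t ≠ 0 := by rintro rfl; exact hn O.zero_mem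
          have hi := (D.mem_or ht0).resolve_left hn
          have e1 : QU Q (UU Q x y) (t⁻¹ • u) = t⁻¹ * t⁻¹ * Q (u : V) := by
            rw [QuadraticMap.map_smul, smul_eq_mul]; rfl
          have e2 : p⁻¹ * (1 + t⁻¹ * t⁻¹ * Q (u : V)) ∈ O := by
            have := O.mul_mem ht (O.mul_mem hi (D.mem_of_p hi))
            convert this using 1
            field_simp
          have e3 : QU Q (UU Q x y) (t⁻¹ • u) ∈ O := by
            have := O.sub_mem (D.mem_of_p e2) O.one_mem
            rw [e1]
            convert this using 1
            ring
          have e4 := hc1 _ e3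
          apply D.p_inv
          have := O.sub_mem e2 e4
          rw [e1] at this
          convert this using 1
          ring)
        (by
          intro t ht u hu h1
          have := O.sub_mem h1 (hc1 u hu)
          convert this using 1
          change _ = _ - p⁻¹ * Q (u : V)
          ring)
      rw [show m + 1 + 1 = n by omega] at H1
      refine ⟨_, _, ?_, H1, H2⟩
      rw [D.eCard_one, D.hyp_i hanU hf (hc1 _ hb) hf']
      have h4 := D.eCard_pos hA
      intro e
      have h5 : 0 < D.qq * eCard O p (QU Q (UU Q x y)) (D.AA hanU) := by positivity
      nlinarith

/-- ADC lattices are maximal. -/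
theorem max_of_adc [FiniteDimensional K V] {Q : QuadraticForm K V} (hQ : Nondeg Q) {n : ℕ}
    (hn : 2 ≤ n) (hdim : Module.finrank K V = n + 1) {L : Submodule O V} (hL : ILat O Q L)
    (hadc : IsADC O Q (L : Set V) n) : MaxIn O Q L := by
  obtain ⟨M, hLM, hM, hMm⟩ := D.exists_max hQ hL
  by_cases hne : L = M
  · rwa [hne]
  exfalso
  have hp := D.p_ne
  obtain ⟨c, c', hcc, hc, hc'⟩ := D.dd_main n V Q hQ hdim (by
    intro han
    have hA := D.AA_ilat han
    constructor
    · by_contra! hcon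
      obtain ⟨u, hu, hu1, hu2⟩ := D.cw (Q := p⁻¹ • Q) (A := D.AA han)
        ⟨hA.fg, hA.full, fun z hz => hcon z hz⟩ (by omega)
      apply hu1
      rw [mem_AA, D.qdiv]
      exact hu2
    · by_contra! hcon
      obtain ⟨u, hu, hu1, hu2⟩ := D.cw hA (by omega)
      apply hu1
      rw [mem_AA, D.qdiv]
      exact hcon u hu2)
  exact hcc ((D.key hdim hM hLM hne hadc hc).trans (D.key hdim hM hLM hne hadc hc').symm)

end LD
end
end QW

namespace QW
open QuadraticMap

section local_field
variable (F : Type) [Field F] [NumberField F]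
  (v : HeightOneSpectrum (NumberField.RingOfIntegers F))

local notation "ι" => algebraMap F (HeightOneSpectrum.adicCompletion F v)

theorem mem_Ov {x : Fv F v} : x ∈ Ov F v ↔ ‖x‖ ≤ 1 := by
  rw [Valued.toNormedField.norm_le_one_iff]
  rfl

theorem mem_Ov' {x : Fv F v} : x ∈ Ov F v ↔ Valued.v x ≤ 1 := Iff.rfl

theorem val_coe (d : F) : Valued.v (ι d) = v.valuation F d := by
  rw [HeightOneSpectrum.algebraMap_adicCompletion]
  exact HeightOneSpectrum.valuedAdicCompletion_eq_valuation' v d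

theorem approx (x c : Fv F v) (hc : c ≠ 0) : ∃ d : F, (x - ι d) * c ∈ Ov F v := by
  have h := HeightOneSpectrum.denseRange_algebraMap (K := F) v
  have hc' : 0 < ‖c⁻¹‖ := norm_pos_iff.2 (inv_ne_zero hc)
  obtain ⟨d, hd⟩ := h.exists_dist_lt x hc'
  refine ⟨d, ?_⟩
  rw [mem_Ov, norm_mul, ← dist_eq_norm]
  have hcp : 0 < ‖c‖ := norm_pos_iff.2 hc
  rw [norm_inv] at hd
  have := mul_le_mul_of_nonneg_right hd.le hcp.le
  rwa [inv_mul_cancel₀ hcp.ne'] at this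

theorem den (d : F) (hd : ι d ∈ Ov F v) :
    ∃ t : NumberField.RingOfIntegers F, t ∉ v.asIdeal ∧ (t : F) * d ∈ OF F := by
  rw [mem_Ov', val_coe] at hd
  obtain ⟨n, ⟨t, ht⟩, h⟩ := v.exists_primeCompl_mul_eq_of_integer d hd
  refine ⟨t, ht, ?_⟩
  rw [mul_comm]
  have : d * (t : F) = (n : F) := h
  rw [this]
  exact n.2

theorem OF_Ov (d : F) (hd : d ∈ OF F) : ι d ∈ Ov F v := by
  rw [mem_Ov', val_coe]
  exact v.valuation_le_one (⟨d, hd⟩ : NumberField.RingOfIntegers F)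

theorem unit_Ov (t : NumberField.RingOfIntegers F) (ht : t ∉ v.asIdeal) :
    (ι (t : F))⁻¹ ∈ Ov F v := by
  rw [mem_Ov', map_inv₀, val_coe]
  have : v.valuation F (t : F) = 1 := v.valuation_eq_one_iff_notMem.2 ht
  rw [this, inv_one]

theorem exists_LD : ∃ p, LD (Ov F v) p := by
  obtain ⟨π, hπ⟩ := v.valuation_exists_uniformizer F
  have hp1 : ∀ n : ℤ, Valued.v ((ι π) ^ n) = WithZero.exp (-n) := by
    intro n
    rw [map_zpow₀, val_coe, hπ, ← WithZero.exp_zsmul]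
    simp
  have hp : Valued.v (ι π) = WithZero.exp (-1) := by rw [val_coe, hπ]
  have hp0 : ι π ≠ 0 := by
    intro h
    rw [h, map_zero] at hp
    exact WithZero.exp_ne_zero hp.symm
  have hpO : ι π ∈ Ov F v := by
    rw [mem_Ov', hp, ← WithZero.exp_zero, WithZero.exp_le_exp]; norm_num
  have hpn : ‖ι π‖ < 1 := by
    rw [Valued.toNormedField.norm_lt_one_iff, hp, ← WithZero.exp_zero, WithZero.exp_lt_exp]; norm_num
  have hmem : ∀ x : Fv F v, ‖x‖ < 1 → (ι π)⁻¹ * x ∈ Ov F v := by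
    intro x hx
    by_cases hx0 : x = 0
    · rw [hx0, mul_zero]; exact (Ov F v).zero_mem
    rw [Valued.toNormedField.norm_lt_one_iff] at hx
    rw [mem_Ov', map_mul, map_inv₀, hp]
    have hvx : Valued.v x ≠ 0 := (Valuation.ne_zero_iff _).2 hx0
    rw [← WithZero.exp_log hvx] at hx ⊢
    rw [← WithZero.exp_zero, WithZero.exp_lt_exp] at hx
    rw [← WithZero.exp_neg, ← WithZero.exp_add, ← WithZero.exp_zero, WithZero.exp_le_exp]
    omega
  refine ⟨ι π, hpO, hp0, ?_, ?_, ?_, ?_, ?_, ?_⟩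
  · rw [mem_Ov', map_inv₀, hp, ← WithZero.exp_neg, ← WithZero.exp_zero, WithZero.exp_le_exp]
    norm_num
  · intro x hx
    have hvx : Valued.v x ≠ 0 := (Valuation.ne_zero_iff _).2 hx
    refine ⟨WithZero.log (Valued.v x), ?_⟩
    have : Valued.v (x * (ι π) ^ (WithZero.log (Valued.v x))) = 1 := by
      rw [map_mul, hp1]
      nth_rewrite 1 [← WithZero.exp_log hvx]
      rw [← WithZero.exp_add, add_neg_cancel, WithZero.exp_zero]
    rw [mem_Ov', mem_Ov', map_inv₀, this, inv_one]
    exact ⟨le_rfl, le_rfl⟩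
  · intro a ha
    let f : Fv F v → Fv F v := fun t => a + ι π * (t * t)
    let s : ℕ → Fv F v := fun n => f^[n] 0
    have hs : ∀ n, s (n + 1) = f (s n) := fun n => Function.iterate_succ_apply' f n 0
    have hsO : ∀ n, s n ∈ Ov F v := by
      intro n
      induction n with
      | zero => exact (Ov F v).zero_mem
      | succ n ih =>
        rw [hs]
        exact (Ov F v).add_mem ha ((Ov F v).mul_mem hpO ((Ov F v).mul_mem ih ih))
    have hd : ∀ n, dist (s n) (s (n + 1)) ≤ 1 * ‖ι π‖ ^ n := by
      intro n
      induction n with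
      | zero =>
        rw [pow_zero, one_mul, dist_eq_norm, ← mem_Ov]
        exact (Ov F v).sub_mem (hsO _) (hsO _)
      | succ n ih =>
        have e : s (n + 1) - s (n + 1 + 1) = ι π * ((s n + s (n + 1)) * (s n - s (n + 1))) := by
          rw [hs (n + 1)]; nth_rewrite 1 [hs n]; simp only [f]; ring
        have h1 : ‖s n + s (n + 1)‖ ≤ 1 := (mem_Ov F v).1 ((Ov F v).add_mem (hsO _) (hsO _))
        rw [dist_eq_norm] at ih ⊢
        rw [e, norm_mul, norm_mul, one_mul, pow_succ']
        rw [one_mul] at ih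
        refine mul_le_mul_of_nonneg_left ?_ (norm_nonneg _)
        calc _ ≤ 1 * ‖ι π‖ ^ n := mul_le_mul h1 ih (norm_nonneg _) zero_le_one
          _ = _ := one_mul _
    have hc : CauchySeq s := cauchySeq_of_le_geometric _ _ hpn hd
    obtain ⟨t, ht⟩ := cauchySeq_tendsto_of_complete hc
    have htO : t ∈ Ov F v := by
      rw [mem_Ov]
      exact le_of_tendsto (continuous_norm.continuousAt.tendsto.comp ht)
        (Filter.Eventually.of_forall fun n => (mem_Ov F v).1 (hsO n))
    have hf : Continuous f := by fun_prop
    have h1 : Filter.Tendsto (fun n => s (n + 1)) Filter.atTop (nhds (f t)) := by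
      simp_rw [hs]
      exact hf.continuousAt.tendsto.comp ht
    have h2 : f t = t := tendsto_nhds_unique h1 (ht.comp (Filter.tendsto_add_atTop_nat 1))
    refine ⟨t, htO, ?_⟩
    nth_rewrite 1 [← h2]
    simp only [f]; ring
  · have : ι 2 ≠ 0 := by
      rw [ne_eq, map_eq_zero]; exact two_ne_zero
    rwa [map_ofNat] at this
  · let g : NumberField.RingOfIntegers F →+* Ov F v :=
      ((algebraMap F (Fv F v)).comp (algebraMap (NumberField.RingOfIntegers F) F)).codRestrict _
        (fun x => OF_Ov F v _ x.2)
    let I : Ideal (Ov F v) := Ideal.span {(⟨ι π, hpO⟩ : Ov F v)}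
    have hI : ∀ x : Ov F v, ‖(x : Fv F v)‖ < 1 → x ∈ I := by
      intro x hx
      rw [Ideal.mem_span_singleton]
      exact ⟨⟨_, hmem x hx⟩, Subtype.ext (by simp [mul_inv_cancel_left₀ hp0])⟩
    have hk : ∀ a ∈ v.asIdeal, (Ideal.Quotient.mk I).comp g a = 0 := by
      intro a ha
      rw [RingHom.comp_apply, Ideal.Quotient.eq_zero_iff_mem]
      apply hI
      rw [Valued.toNormedField.norm_lt_one_iff]
      change Valued.v (ι (a : F)) < 1
      rw [val_coe]
      exact (v.valuation_lt_one_iff_mem a).2 ha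
    have hfin : Finite (NumberField.RingOfIntegers F ⧸ v.asIdeal) :=
      Ideal.finiteQuotientOfFreeOfNeBot _ v.ne_bot
    refine Finite.of_surjective (Ideal.Quotient.lift v.asIdeal _ hk) ?_
    refine Ideal.Quotient.lift_surjective_of_surjective _ hk ?_
    intro x
    obtain ⟨x, rfl⟩ := Ideal.Quotient.mk_surjective x
    have h := HeightOneSpectrum.denseRange_algebraMap (K := F) v
    obtain ⟨d, hd⟩ := h.exists_dist_lt (x : Fv F v) one_pos
    rw [dist_eq_norm] at hd
    have hdO : ι d ∈ Ov F v := by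
      have := (Ov F v).sub_mem x.2 ((mem_Ov F v).2 hd.le)
      rwa [sub_sub_cancel] at this
    obtain ⟨a, ha⟩ := v.exists_valuation_sub_lt_of_integer
      (by rw [mem_Ov', val_coe] at hdO; exact hdO) 1
    refine ⟨a, ?_⟩
    rw [RingHom.comp_apply, Ideal.Quotient.eq]
    have e : g a - x = (g a - ⟨ι d, hdO⟩) - (x - ⟨ι d, hdO⟩) := by ring
    rw [e]
    refine I.sub_mem (hI _ ?_) (hI _ hd)
    rw [Valued.toNormedField.norm_lt_one_iff]
    change Valued.v (ι (a : F) - ι d) < 1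
    rw [← map_sub, val_coe]
    exact ha
  · exact (inferInstance : IsPrincipalIdealRing (v.adicCompletionIntegers F))

end local_field
end QW

namespace QW
open QuadraticMap

section globalfield
variable (F : Type) [Field F] [NumberField F]

theorem approx_fin (v : HeightOneSpectrum (NumberField.RingOfIntegers F))
    (x : Fv F v) (s : Finset (Fv F v)) :
    ∃ d : F, (x - algebraMap F (Fv F v) d) ∈ Ov F v ∧
      ∀ c ∈ s, (x - algebraMap F (Fv F v) d) * c ∈ Ov F v := by
  classical
  obtain ⟨c0, -, hmax⟩ := (insert 1 s).exists_max_image (fun c => ‖c‖) ⟨1, by simp⟩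
  have h1 := hmax 1 (by simp)
  have hc0 : c0 ≠ 0 := by
    rintro rfl
    simp only [norm_one, norm_zero] at h1
    exact absurd h1 (by norm_num)
  obtain ⟨d, hd⟩ := approx F v x c0 hc0
  have key : ∀ c ∈ insert 1 s, (x - algebraMap F (Fv F v) d) * c ∈ Ov F v := by
    intro c hc
    rw [mem_Ov, norm_mul] at hd ⊢
    exact (mul_le_mul_of_nonneg_left (hmax c hc) (norm_nonneg _)).trans hd
  refine ⟨d, ?_, fun c hc => key c (by simp [hc])⟩
  simpa using key 1 (by simp)

theorem den_fin (v : HeightOneSpectrum (NumberField.RingOfIntegers F)) (s : Finset F)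
    (hs : ∀ d ∈ s, algebraMap F (Fv F v) d ∈ Ov F v) :
    ∃ t : NumberField.RingOfIntegers F, t ∉ v.asIdeal ∧ ∀ d ∈ s, (t : F) * d ∈ OF F := by
  classical
  induction s using Finset.induction_on with
  | empty => exact ⟨1, fun h => v.isPrime.ne_top ((Ideal.eq_top_iff_one _).2 h), by simp⟩
  | insert a s ha ih =>
    obtain ⟨t, ht, h1⟩ := ih fun d hd => hs d (by simp [hd])
    obtain ⟨u, hu, h2⟩ := den F v a (hs a (by simp))
    refine ⟨t * u, fun h => (v.isPrime.mem_or_mem h).elim ht hu, ?_⟩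
    intro d hd
    have e : ((t * u : NumberField.RingOfIntegers F) : F) = (t : F) * (u : F) := rfl
    rw [e]
    rcases Finset.mem_insert.1 hd with rfl | hd
    · rw [mul_assoc]; exact (OF F).mul_mem t.2 h2
    · rw [mul_comm (t : F), mul_assoc]; exact (OF F).mul_mem u.2 (h1 d hd)

variable {V : Type} [AddCommGroup V] [Module F V]
  (Q : QuadraticForm F V) (v : HeightOneSpectrum (NumberField.RingOfIntegers F))

theorem toVv_add (x y : V) : toVv F v (x + y) = toVv F v x + toVv F v y :=
  TensorProduct.tmul_add _ _ _

theorem toVv_smul (a : F) (x : V) :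
    toVv F v (a • x) = algebraMap F (Fv F v) a • toVv F v x := by
  simp only [toVv]
  rw [TensorProduct.tmul_smul, algebraMap_smul]

theorem toVv_sub (x y : V) : toVv F v (x - y) = toVv F v x - toVv F v y :=
  TensorProduct.tmul_sub _ _ _

theorem toVv_sum {α : Type} (s : Finset α) (f : α → V) :
    toVv F v (∑ i ∈ s, f i) = ∑ i ∈ s, toVv F v (f i) :=
  TensorProduct.tmul_sum _ _ _

theorem Qv_toVv (x : V) : Qv F Q v (toVv F v x) = algebraMap F (Fv F v) (Q x) := by
  let _ : Invertible (2 : F) := invertibleOfNonzero two_ne_zero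
  have := QuadraticForm.baseChange_tmul (A := Fv F v) Q 1 x
  rw [mul_one, Algebra.smul_def, mul_one] at this
  exact this

theorem polar_toVv (x y : V) :
    polar (Qv F Q v) (toVv F v x) (toVv F v y) = algebraMap F (Fv F v) (polar Q x y) := by
  rw [polar, polar, ← toVv_add, Qv_toVv, Qv_toVv, Qv_toVv, map_sub, map_sub]

/-- The module structure over the subring `Ov` obtained by restriction of scalars. -/
abbrev modOv (K : Type) [Field K] (O : Subring K) (V : Type) [AddCommGroup V] [Module K V] :
    Module O V := inferInstance

theorem ov_sub (K : Type) [Field K] (O : Subring K) (V : Type) [AddCommGroup V] [Module K V]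
    (c : O) (a : K) (x : V) : c • x - a • x = ((c : K) - a) • x :=
  (sub_smul (c : K) a x).symm

local instance modOvInst : Module (Ov F v) (Vv F V v) :=
  modOv (Fv F v) (Ov F v) (Vv F V v)

local instance smulOvInst : SMul (Ov F v) (Vv F V v) :=
  (modOv (Fv F v) (Ov F v) (Vv F V v)).toSMul

/-- The completion of a lattice, as a submodule. -/
def LL (L : Submodule (OF F) V) : Submodule (Ov F v) (Vv F V v) :=
  Submodule.span (Ov F v) (toVv F v '' (L : Set V))

variable {F Q} {L : Submodule (OF F) V}

theorem Lv_eq : Lv F (L : Set V) v = (LL F v L : Set (Vv F V v)) := ospan_eq _ _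

theorem toVv_mem {x : V} (hx : x ∈ L) : toVv F v x ∈ LL F v L :=
  Submodule.subset_span ⟨x, hx, rfl⟩

theorem LL_int (hL : ∀ x ∈ L, Q x ∈ OF F) : ∀ x ∈ LL F v L, Qv F Q v x ∈ Ov F v := by
  have hp : ∀ x ∈ LL F v L, ∀ y ∈ LL F v L, polar (Qv F Q v) x y ∈ Ov F v := by
    intro x hx y hy
    refine Submodule.span_induction₂ (p := fun x y _ _ => polar (Qv F Q v) x y ∈ Ov F v)
      ?_ ?_ ?_ ?_ ?_ ?_ ?_ hx hy
    · rintro _ _ ⟨x, hx, rfl⟩ ⟨y, hy, rfl⟩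
      rw [polar_toVv]
      exact OF_Ov F v _ (polar_mem hL hx hy)
    · intro y _; rw [polar_zero_left]; exact (Ov F v).zero_mem
    · intro y _; rw [polar_zero_right]; exact (Ov F v).zero_mem
    · intro x y z _ _ _ h1 h2; rw [polar_add_left]; exact (Ov F v).add_mem h1 h2
    · intro x y z _ _ _ h1 h2; rw [polar_add_right]; exact (Ov F v).add_mem h1 h2
    · intro r x y _ _ h; rw [psmul_left]; exact (Ov F v).mul_mem r.2 h
    · intro r x y _ _ h; rw [psmul_right]; exact (Ov F v).mul_mem r.2 h
  intro x hx
  induction hx using Submodule.span_induction with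
  | mem x h =>
    obtain ⟨x, hx, rfl⟩ := h
    rw [Qv_toVv]; exact OF_Ov F v _ (hL x hx)
  | zero => rw [QuadraticMap.map_zero]; exact (Ov F v).zero_mem
  | add x y hx hy h1 h2 =>
    rw [QuadraticMap.map_add (Qv F Q v)]
    exact (Ov F v).add_mem ((Ov F v).add_mem h1 h2) (hp x hx y hy)
  | smul a x hx h =>
    rw [qsmul]; exact (Ov F v).mul_mem ((Ov F v).mul_mem a.2 a.2) h

theorem LL_polar {z : Vv F V v} (h : ∀ y ∈ L, polar (Qv F Q v) z (toVv F v y) ∈ Ov F v) :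
    ∀ y ∈ LL F v L, polar (Qv F Q v) z y ∈ Ov F v := by
  intro y hy
  induction hy using Submodule.span_induction with
  | mem x hx => obtain ⟨x, hx, rfl⟩ := hx; exact h x hx
  | zero => rw [polar_zero_right]; exact (Ov F v).zero_mem
  | add x y hx hy h1 h2 => rw [polar_add_right]; exact (Ov F v).add_mem h1 h2
  | smul a x hx h => rw [psmul_right]; exact (Ov F v).mul_mem a.2 h

theorem LL_fg (hL : L.FG) : (LL F v L).FG := by
  classical
  obtain ⟨s, hs⟩ := hL
  refine ⟨s.image (toVv F v), le_antisymm ?_ ?_⟩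
  · refine Submodule.span_le.2 ?_
    intro y hy
    obtain ⟨x, hx, rfl⟩ := Finset.mem_image.1 hy
    exact toVv_mem v (hs ▸ Submodule.subset_span hx)
  · refine Submodule.span_le.2 ?_
    rintro _ ⟨x, hx, rfl⟩
    have hx' : x ∈ Submodule.span (OF F) (s : Set V) := by rw [hs]; exact hx
    rw [SetLike.mem_coe]
    induction hx' using Submodule.span_induction with
    | mem x h => exact Submodule.subset_span (by simpa using ⟨x, h, rfl⟩)
    | zero =>
      have : toVv F v (0 : V) = 0 := TensorProduct.tmul_zero _ _
      rw [this]; exact Submodule.zero_mem _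
    | add x y h1 h2 h3 h4 =>
      rw [toVv_add]
      exact Submodule.add_mem _ (h3 (hs ▸ h1)) (h4 (hs ▸ h2))
    | smul a x h1 h2 =>
      have : toVv F v (a • x) = (⟨_, OF_Ov F v a a.2⟩ : Ov F v) • toVv F v x :=
        toVv_smul F v (a : F) x
      rw [this]
      exact Submodule.smul_mem _ _ (h2 (hs ▸ h1))

theorem exists_basis_in [FiniteDimensional F V] (hL : Submodule.span F (L : Set V) = ⊤) :
    ∃ b : Module.Basis (Fin (Module.finrank F V)) F V, ∀ i, b i ∈ L := by
  let b := Module.Basis.ofSpan hL.ge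
  have hb : ∀ i, b i ∈ L := fun i => Module.Basis.ofSpan_subset hL.ge ⟨i, rfl⟩
  have hfin := Module.Finite.finite_basis b
  have hft := @Fintype.ofFinite _ hfin
  have hc := Module.finrank_eq_card_basis b
  refine ⟨b.reindex (Fintype.equivFinOfCardEq hc.symm), fun i => ?_⟩
  rw [Module.Basis.reindex_apply]
  exact hb _

section basis
variable {m : ℕ} (b : Module.Basis (Fin m) F V)

/-- The extended basis. -/
def bv : Module.Basis (Fin m) (Fv F v) (Vv F V v) := b.baseChange (Fv F v)

theorem bv_apply (i : Fin m) : bv v b i = toVv F v (b i) := Module.Basis.baseChange_apply _ _ _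

theorem bv_repr (x : V) (i : Fin m) :
    (bv v b).repr (toVv F v x) i = algebraMap F (Fv F v) (b.repr x i) := by
  rw [bv, toVv, Module.Basis.baseChange_repr_tmul, Algebra.smul_def, mul_one]

end basis

theorem LL_ilat [FiniteDimensional F V] (h : ILat (OF F) Q L) :
    ILat (Ov F v) (Qv F Q v) (LL F v L) := by
  refine ⟨LL_fg v h.fg, ?_, LL_int v h.int⟩
  obtain ⟨b, hb⟩ := exists_basis_in h.full
  rw [eq_top_iff, ← (bv v b).span_eq]
  refine Submodule.span_mono ?_
  rintro _ ⟨i, rfl⟩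
  rw [bv_apply]
  exact toVv_mem v (hb i)

theorem Qv_nondeg [FiniteDimensional F V] (hQ : Nondeg Q) : Nondeg (Qv F Q v) := by
  classical
  let b := Module.finBasis F V
  let φ : V →ₗ[F] (Fin (Module.finrank F V) → F) := LinearMap.pi fun i => Q.polarBilin (b i)
  have hφ : ∀ y i, φ y i = polar Q (b i) y := fun y i => rfl
  have hinj : Function.Injective φ := by
    rw [← LinearMap.ker_eq_bot, LinearMap.ker_eq_bot']
    intro y hy
    apply hQ
    intro z
    rw [polar_comm]
    have h0 : Q.polarBilin.flip y = 0 := by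
      refine b.ext fun i => ?_
      exact congrFun hy i
    exact LinearMap.congr_fun h0 z
  have hsurj : Function.Surjective φ :=
    (LinearMap.injective_iff_surjective_of_finrank_eq_finrank (by simp)).1 hinj
  intro x hx
  refine (bv v b).ext_elem fun j => ?_
  obtain ⟨y, hy⟩ := hsurj (Pi.single j 1)
  have h1 := hx (toVv F v y)
  rw [← (bv v b).sum_repr x] at h1
  have h2 : polar (Qv F Q v) (∑ i, (bv v b).repr x i • bv v b i) (toVv F v y) =
      ∑ i, (bv v b).repr x i * polar (Qv F Q v) (bv v b i) (toVv F v y) := by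
    change (Qv F Q v).polarBilin _ _ = _
    rw [map_sum, LinearMap.sum_apply]
    refine Finset.sum_congr rfl fun i _ => ?_
    rw [map_smul, LinearMap.smul_apply]
    rfl
  rw [h2, Finset.sum_eq_single j] at h1
  · rw [bv_apply, polar_toVv, ← hφ, hy, Pi.single_eq_same, map_one, mul_one] at h1
    rw [h1]; simp
  · intro i _ hi
    rw [bv_apply, polar_toVv, ← hφ, hy, Pi.single_eq_of_ne hi, map_zero, mul_zero]
  · simp

theorem smul_memL (t : NumberField.RingOfIntegers F) {x : V} (hx : x ∈ L) : (t : F) • x ∈ L :=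
  L.smul_mem (⟨(t : F), t.2⟩ : OF F) hx

theorem local_of_global [FiniteDimensional F V] (h : ILat (OF F) Q L) (hM : MaxIn (OF F) Q L) :
    MaxIn (Ov F v) (Qv F Q v) (LL F v L) := by
  classical
  intro x hx hxy
  obtain ⟨b, hb⟩ := exists_basis_in h.full
  choose d hd _ using fun i => approx_fin F v ((bv v b).repr x i) ∅
  let x0 : V := ∑ i, d i • b i
  have hz : x - toVv F v x0 ∈ LL F v L := by
    have e : x - toVv F v x0 =
        ∑ i, ((bv v b).repr x i - algebraMap F (Fv F v) (d i)) • toVv F v (b i) := by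
      nth_rewrite 1 [← (bv v b).sum_repr x]
      simp only [x0]
      rw [toVv_sum, ← Finset.sum_sub_distrib]
      refine Finset.sum_congr rfl fun i _ => ?_
      rw [toVv_smul, bv_apply]
      exact (sub_smul _ _ _).symm
    rw [e]
    exact Submodule.sum_mem _ fun i _ =>
      Submodule.smul_mem _ (⟨_, hd i⟩ : Ov F v) (toVv_mem v (hb i))
  have hIntg := LL_int v h.int
  have hx0 : toVv F v x0 = x + -(x - toVv F v x0) := by abel
  have h1 : Qv F Q v (toVv F v x0) ∈ Ov F v := by
    rw [hx0, QuadraticMap.map_add (Qv F Q v), QuadraticMap.map_neg, polar_neg_right]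
    exact (Ov F v).add_mem ((Ov F v).add_mem hx (hIntg _ hz)) ((Ov F v).neg_mem (hxy _ hz))
  have h2 : ∀ y ∈ L, polar (Qv F Q v) (toVv F v x0) (toVv F v y) ∈ Ov F v := by
    intro y hy
    rw [hx0, polar_add_left, polar_neg_left]
    exact (Ov F v).add_mem (hxy _ (toVv_mem v hy))
      ((Ov F v).neg_mem (polar_mem hIntg hz (toVv_mem v hy)))
  rw [Qv_toVv] at h1
  obtain ⟨s, hs⟩ := h.fg
  obtain ⟨t, ht, htd⟩ := den_fin F v (insert (Q x0) (s.image fun g => polar Q x0 g)) (by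
    intro d hd
    rcases Finset.mem_insert.1 hd with rfl | hd
    · exact h1
    · obtain ⟨g, hg, rfl⟩ := Finset.mem_image.1 hd
      rw [← polar_toVv]
      exact h2 g (hs ▸ Submodule.subset_span hg))
  have htx : (t : F) • x0 ∈ L := by
    apply hM
    · rw [QuadraticMap.map_smul, smul_eq_mul, mul_assoc]
      exact (OF F).mul_mem t.2 (htd _ (by simp))
    · intro y hy
      rw [← hs] at hy
      induction hy using Submodule.span_induction with
      | mem y hy =>
        rw [polar_smul_left, smul_eq_mul]
        exact htd _ (Finset.mem_insert_of_mem (Finset.mem_image_of_mem _ hy))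
      | zero => rw [polar_zero_right]; exact (OF F).zero_mem
      | add x y hx hy h1 h2 => rw [polar_add_right]; exact (OF F).add_mem h1 h2
      | smul a x hx h => rw [psmul_right]; exact (OF F).mul_mem a.2 h
  have h3 := Submodule.smul_mem _ (⟨_, unit_Ov F v t ht⟩ : Ov F v) (toVv_mem v htx)
  have ht0 : algebraMap F (Fv F v) (t : F) ≠ 0 := by
    rw [ne_eq, map_eq_zero]
    intro h0
    have : t = 0 := by exact_mod_cast h0
    exact ht (this ▸ v.asIdeal.zero_mem)
  have h4 : (⟨_, unit_Ov F v t ht⟩ : Ov F v) • toVv F v ((t : F) • x0) = toVv F v x0 := by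
    rw [toVv_smul]
    exact inv_smul_smul₀ ht0 (toVv F v x0)
  rw [h4] at h3
  have := Submodule.add_mem _ hz h3
  rwa [sub_add_cancel] at this

theorem den_of_local [FiniteDimensional F V] (hfull : Submodule.span F (L : Set V) = ⊤) {x : V}
    (hx : toVv F v x ∈ LL F v L) :
    ∃ t : NumberField.RingOfIntegers F, t ∉ v.asIdeal ∧ (t : F) • x ∈ L := by
  classical
  obtain ⟨b, hb⟩ := exists_basis_in hfull
  obtain ⟨k, c, g, hc⟩ := Submodule.mem_span_set'.1 hx
  choose l hl hlg using fun j => (g j).2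
  choose a ha1 ha2 using fun j => approx_fin F v (c j : Fv F v)
    (Finset.univ.image fun i => algebraMap F (Fv F v) (b.repr (l j) i))
  let d : Fin (Module.finrank F V) → F := fun i => b.repr (x - ∑ j, a j • l j) i
  have hd : ∀ i, algebraMap F (Fv F v) (d i) ∈ Ov F v := by
    intro i
    have e : toVv F v (x - ∑ j, a j • l j) =
        ∑ j, ((c j : Fv F v) - algebraMap F (Fv F v) (a j)) • toVv F v (l j) := by
      rw [toVv_sub, toVv_sum, ← hc, ← Finset.sum_sub_distrib]
      refine Finset.sum_congr rfl fun j _ => ?_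
      rw [toVv_smul, ← hlg]
      exact ov_sub (Fv F v) (Ov F v) (Vv F V v) (c j) _ _
    simp only [d]
    rw [← bv_repr, e, map_sum, Finsupp.finsetSum_apply]
    refine (Ov F v).sum_mem fun j _ => ?_
    rw [map_smul, Finsupp.smul_apply, bv_repr, smul_eq_mul]
    exact ha2 j _ (Finset.mem_image_of_mem _ (Finset.mem_univ i))
  have ha : ∀ j, algebraMap F (Fv F v) (a j) ∈ Ov F v := by
    intro j
    have := (Ov F v).sub_mem (c j).2 (ha1 j)
    rwa [sub_sub_cancel] at this
  obtain ⟨t, ht, htd⟩ := den_fin F v (Finset.univ.image d ∪ Finset.univ.image a) (by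
    intro z hz
    rcases Finset.mem_union.1 hz with hz | hz
    · obtain ⟨i, -, rfl⟩ := Finset.mem_image.1 hz; exact hd i
    · obtain ⟨i, -, rfl⟩ := Finset.mem_image.1 hz; exact ha i)
  refine ⟨t, ht, ?_⟩
  have e : x = (∑ i, d i • b i) + ∑ j, a j • l j := by
    simp only [d]
    rw [b.sum_repr, sub_add_cancel]
  rw [e, smul_add, Finset.smul_sum, Finset.smul_sum]
  refine L.add_mem (L.sum_mem fun i _ => ?_) (L.sum_mem fun j _ => ?_)
  · rw [smul_smul]
    exact L.smul_mem (⟨_, htd (d i) (by simp)⟩ : OF F) (hb i)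
  · rw [smul_smul]
    exact L.smul_mem (⟨_, htd (a j) (by simp)⟩ : OF F) (hl j)

theorem global_of_local [FiniteDimensional F V] (h : ILat (OF F) Q L)
    (hM : ∀ v, MaxIn (Ov F v) (Qv F Q v) (LL F v L)) : MaxIn (OF F) Q L := by
  intro x hx hxy
  let I : Ideal (NumberField.RingOfIntegers F) :=
    { carrier := {t | (t : F) • x ∈ L}
      zero_mem' := by simp
      add_mem' := by
        intro s t hs ht
        have e : ((s + t : NumberField.RingOfIntegers F) : F) = (s : F) + (t : F) := rfl
        change ((s + t : NumberField.RingOfIntegers F) : F) • x ∈ L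
        rw [e, add_smul]
        exact L.add_mem hs ht
      smul_mem' := by
        intro s t ht
        have e : ((s • t : NumberField.RingOfIntegers F) : F) = (s : F) * (t : F) := rfl
        change ((s • t : NumberField.RingOfIntegers F) : F) • x ∈ L
        rw [e, mul_smul]
        exact smul_memL s ht }
  by_cases hI : I = ⊤
  · have : (1 : NumberField.RingOfIntegers F) ∈ I := by rw [hI]; trivial
    have h1 : ((1 : NumberField.RingOfIntegers F) : F) • x ∈ L := this
    have e : ((1 : NumberField.RingOfIntegers F) : F) = 1 := rfl
    rwa [e, one_smul] at h1
  · exfalso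
    obtain ⟨M, hM1, hM2⟩ := Ideal.exists_le_maximal I hI
    let v : HeightOneSpectrum (NumberField.RingOfIntegers F) :=
      ⟨M, hM1.isPrime, Ring.ne_bot_of_isMaximal_of_not_isField hM1
        (NumberField.RingOfIntegers.not_isField F)⟩
    have hloc : toVv F v x ∈ LL F v L := by
      apply hM v
      · rw [Qv_toVv]; exact OF_Ov F v _ hx
      · refine LL_polar v fun y hy => ?_
        rw [polar_toVv]
        exact OF_Ov F v _ (hxy y hy)
    obtain ⟨t, ht, htx⟩ := den_of_local v h.full hloc
    exact ht (hM2 htx)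

theorem main_aux (Q : QuadraticForm F V) (hQ : Nondeg Q)
    (n : ℕ) (hn : 2 ≤ n) (hrank : Module.finrank F V = n + 1)
    (L : Set V) (hL : IsLatticeOn (OF F) L) (hLint : IsIntegral (OF F) Q L) :
    IsLocADC F Q L n ↔ IsMaximal (OF F) Q L := by
  have : FiniteDimensional F V := Module.finite_of_finrank_pos (by omega)
  obtain ⟨h1, h2⟩ := hL
  obtain ⟨L, hfg, rfl⟩ := (isLattice_iff _ _).1 h1
  have hI : ILat (OF F) Q L := ⟨hfg, h2, hLint⟩
  rw [isMaximal_iff hI]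
  constructor
  · intro h
    refine global_of_local hI fun v => ?_
    obtain ⟨p, D⟩ := exists_LD F v
    have hv := h v
    rw [Lv_eq] at hv
    exact D.max_of_adc (Qv_nondeg v hQ) hn (by rw [Module.finrank_baseChange, hrank])
      (LL_ilat v hI) hv
  · intro h v
    obtain ⟨p, D⟩ := exists_LD F v
    rw [Lv_eq]
    exact D.adc_of_max (Qv_nondeg v hQ) (LL_ilat v hI) (local_of_global v hI h) n

end globalfield
end QW

/-- Let `F` be a totally real number field, `n ≥ 2` an integer, and `L`
a positive definite integral `O_F`-lattice of rank `n+1`.  Then `L` is locally `n`-ADC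
if and only if `L` is `O_F`-maximal. -/
theorem locADC_iff_maximal_rank_succ
    (F : Type) [Field F] [NumberField F] (hF : TotallyReal F)
    {V : Type} [AddCommGroup V] [Module F V]
    (Q : QuadraticForm F V) (hQ : Nondeg Q) (hQpos : PosDef F Q)
    (n : ℕ) (hn : 2 ≤ n) (hrank : Module.finrank F V = n + 1)
    (L : Set V) (hL : IsLatticeOn (OF F) L) (hLint : IsIntegral (OF F) Q L) :
    IsLocADC F Q L n ↔ IsMaximal (OF F) Q L := by
  exact QW.main_aux Q hQ n hn hrank L hL hLint
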